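/- arXiv:2110.15050 — 4 statements merged into one kernel-verified Lean document; each statement's English description precedes it below -/
import Mathlib

section
/- Let 0<p<1 and let C_k denote the sequence defined by the Bell-polynomial recursion with α=1, i.e. C_1 = 1/(p+1) and for k ≥ 2, (k-1)(p+1)·C_k = Σ_{j=2}^{k} p^j·j!·B_{k,j}(C_1,…,C_{k-j+1}). Then for every integer k ≥ 1, C_k = p^{k-1}·Γ(kp+k-1)/((p+1)^{2k-1}·Γ(kp)); equivalently C_k = ((k-1)!·p^{k-1}/(p+1)^{2k-1})·C(kp+k-2, k-1), where C(z, k-1) is the generalized binomial coefficient. -/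
open Finset Filter Asymptotics

/-- The root-cluster weight recursion. -/
noncomputable def clusterRec (p : ℝ) (φ : ℕ → ℝ) (r : ℕ → ℕ → ℝ) (b : ℕ → ℝ) : Prop :=
  (∀ m, b m = ∑ k ∈ Finset.Icc 1 m, r m k) ∧
  ∀ n k : ℕ, 1 ≤ n → 1 ≤ k →
    r n k =
      ∑ δ ∈ Finset.range n, ∑ s ∈ (Finset.range (δ + 1)).attach,
        (δ.choose s.1 : ℝ) * (φ δ / (δ.factorial : ℝ)) *
          ∑ f ∈ (Finset.Nat.antidiagonalTuple δ (n - 1)).filter (fun f => ∀ i, 1 ≤ f i),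
            (((n - 1).factorial : ℝ) / ∏ i, ((f i).factorial : ℝ)) *
              ∑ g ∈ (Finset.Nat.antidiagonalTuple s.1 (k - 1)).filter (fun g => ∀ i, 1 ≤ g i),
                p ^ s.1 * (1 - p) ^ (δ - s.1) *
                  (∏ i : Fin s.1,
                    r (f (Fin.castLE (Nat.lt_succ_iff.mp (Finset.mem_range.mp s.2)) i)) (g i)) *
                  ∏ j ∈ Finset.univ.filter (fun j : Fin δ => s.1 ≤ (j : ℕ)), b (f j)

/-- Partial Bell polynomials. -/
noncomputable def bellPartial (k j : ℕ) (x : ℕ → ℝ) : ℝ :=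
  ∑ m ∈ (Fintype.piFinset (fun _ : Fin (k - j + 1) => Finset.range (k + 1))).filter
      (fun m : Fin (k - j + 1) → ℕ => (∑ i : Fin (k - j + 1), ((i : ℕ) + 1) * m i) = k ∧ (∑ i, m i) = j),
    (k.factorial : ℝ) *
      ∏ i : Fin (k - j + 1), x ((i : ℕ) + 1) ^ m i /
        (((m i).factorial : ℝ) * (((i : ℕ) + 1).factorial : ℝ) ^ m i)

open PowerSeries in
lemma coeff_pow_lt (u : PowerSeries ℝ) (h0 : coeff 0 u = 0) (j l : ℕ) (h : l < j) :
    coeff l (u ^ j) = 0 := by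
  have : (X : PowerSeries ℝ) ∣ u := by
    rw [X_dvd_iff]; simpa using h0
  exact (X_pow_dvd_iff.mp (pow_dvd_pow_of_dvd this j)) l h

open PowerSeries in
lemma bell_coeff (C : ℕ → ℝ) (F : PowerSeries ℝ) (h0 : coeff 0 F = 0)
    (hF : ∀ k, 1 ≤ k → coeff k F = C k / (k.factorial : ℝ)) (k j : ℕ) (hj : 1 ≤ j) (hjk : j ≤ k) :
    (j.factorial : ℝ) * bellPartial k j C = (k.factorial : ℝ) * coeff k (F ^ j) := by
  set N := k - j + 1 with hN
  set P : PowerSeries ℝ := ∑ i : Fin N, PowerSeries.monomial ((i : ℕ) + 1) (C ((i:ℕ)+1) / (((i:ℕ)+1).factorial : ℝ)) with hP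
  have hcP : ∀ l, coeff l P = if 1 ≤ l ∧ l ≤ N then C l / (l.factorial : ℝ) else 0 := by
    intro l
    rw [hP, map_sum]
    simp only [coeff_monomial]
    split_ifs with h
    · obtain ⟨h1, h2⟩ := h
      rw [Finset.sum_eq_single (⟨l - 1, by omega⟩ : Fin N)]
      · have : l - 1 + 1 = l := by omega
        simp [this]
      · intro b _ hb
        rw [if_neg]
        intro h
        apply hb
        ext
        simp; omega
      · simp
    · apply Finset.sum_eq_zero
      intro i _
      rw [if_neg]
      have := i.2
      omega
  have hXF : (X : PowerSeries ℝ) ∣ F := by rw [X_dvd_iff]; simpa using h0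
  have hXP : (X : PowerSeries ℝ) ∣ P := by
    rw [X_dvd_iff, ← coeff_zero_eq_constantCoeff_apply, hcP]; simp
  have hd : (X : PowerSeries ℝ) ^ (N + 1) ∣ F - P := by
    rw [X_pow_dvd_iff]
    intro m hm
    rw [map_sub, hcP]
    rcases Nat.eq_zero_or_pos m with rfl | h
    · simpa using h0
    · rw [if_pos ⟨h, by omega⟩, hF m h, sub_self]
  have hFP : coeff k (F ^ j) = coeff k (P ^ j) := by
    obtain ⟨F1, rfl⟩ := hXF
    obtain ⟨P1, hP1⟩ := hXP
    rw [hP1] at hd ⊢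
    have h1 : (X : PowerSeries ℝ) ^ N ∣ F1 - P1 := by
      rw [← mul_sub, pow_succ'] at hd
      exact (mul_dvd_mul_iff_left X_ne_zero).mp hd
    have h2 : (X : PowerSeries ℝ) ^ (k + 1) ∣ (X * F1) ^ j - (X * P1) ^ j := by
      rw [mul_pow, mul_pow, ← mul_sub, show k + 1 = j + N by omega, pow_add]
      exact mul_dvd_mul_left _ (h1.trans (sub_dvd_pow_sub_pow _ _ _))
    have := (X_pow_dvd_iff.mp h2) k (by omega)
    rw [map_sub, sub_eq_zero] at this
    exact this
  rw [hFP, hP, Finset.sum_pow_eq_sum_piAntidiag, map_sum, bellPartial, Finset.mul_sum, Finset.mul_sum]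
  have key : ∀ m : Fin N → ℕ, ∏ i : Fin N, (PowerSeries.monomial ((i : ℕ) + 1) (C ((i:ℕ)+1) / (((i:ℕ)+1).factorial : ℝ))) ^ m i
      = PowerSeries.monomial (∑ i : Fin N, ((i : ℕ) + 1) * m i) (∏ i : Fin N, (C ((i:ℕ)+1) / (((i:ℕ)+1).factorial : ℝ)) ^ m i) := by
    intro m
    have aux : ∀ s : Finset (Fin N), ∏ i ∈ s, (PowerSeries.monomial ((i : ℕ) + 1) (C ((i:ℕ)+1) / (((i:ℕ)+1).factorial : ℝ))) ^ m i
      = PowerSeries.monomial (∑ i ∈ s, ((i : ℕ) + 1) * m i) (∏ i ∈ s, (C ((i:ℕ)+1) / (((i:ℕ)+1).factorial : ℝ)) ^ m i) := by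
      intro s
      induction s using Finset.induction_on with
      | empty => simp
      | insert a s ha ih =>
        rw [Finset.prod_insert ha, Finset.prod_insert ha, Finset.sum_insert ha, ih, PowerSeries.monomial_pow,
          PowerSeries.monomial_mul_monomial, mul_comm (m a)]
    exact aux _
  have hnat : ∀ (c : ℕ) (v : PowerSeries ℝ), coeff k ((c : PowerSeries ℝ) * v) = c * coeff k v := by
    intro c v
    rw [← nsmul_eq_mul, map_nsmul, nsmul_eq_mul]
  apply Finset.sum_subset_zero_on_sdiff
  · intro m hm
    simp only [Finset.mem_filter] at hm
    simp [hm.2.2]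
  · intro m hm
    simp only [Finset.mem_sdiff, Finset.mem_piAntidiag, Finset.mem_filter, Fintype.mem_piFinset, Finset.mem_range] at hm
    rw [key]
    obtain ⟨⟨hm1, _⟩, hm2⟩ := hm
    have hne : ¬ (∑ i : Fin N, ((i : ℕ) + 1) * m i = k) := by
      intro hk
      apply hm2
      refine ⟨fun i => ?_, hk, hm1⟩
      have : m i ≤ ∑ i, m i := Finset.single_le_sum (f := m) (fun _ _ => Nat.zero_le _) (Finset.mem_univ i)
      have h3 : ∑ i, m i = j := hm1
      omega
    rw [hnat, coeff_monomial, if_neg (fun h => hne h.symm)]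
    simp
  · intro m hm
    simp only [Finset.mem_filter] at hm
    obtain ⟨_, hk, hjm⟩ := hm
    rw [key, hk, hnat, coeff_monomial_same]
    have hs := Nat.multinomial_spec (Finset.univ : Finset (Fin N)) m
    rw [hjm] at hs
    rw [← hs]
    push_cast
    simp only [div_pow, Finset.prod_div_distrib, Finset.prod_mul_distrib]
    have hz : (∏ i, ((m i).factorial : ℝ)) ≠ 0 := by
      apply Finset.prod_ne_zero_iff.mpr; intro i _; positivity
    have hz2 : (∏ i : Fin N, (((i:ℕ)+1).factorial : ℝ) ^ m i) ≠ 0 := by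
      apply Finset.prod_ne_zero_iff.mpr; intro i _; positivity
    field_simp
    ring

open PowerSeries in
lemma ode_step (p : ℝ) (hp : 0 < p) (u : PowerSeries ℝ) (h0 : coeff 0 u = 0)
    (h : ∀ k : ℕ, ((k : ℝ) - 1) * (p + 1) * coeff k u = p * ∑ j ∈ Finset.Icc 2 k, coeff k (u ^ j)) :
    PowerSeries.C (p + 1) * (X * d⁄dX ℝ u - u) * (1 - u) = PowerSeries.C p * u ^ 2 := by
  set D := PowerSeries.C (p + 1) * (X * d⁄dX ℝ u - u) with hD
  have hDc : ∀ k, coeff k D = p * ∑ j ∈ Finset.Icc 2 k, coeff k (u ^ j) := by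
    intro k
    rw [← h k, hD, coeff_C_mul, map_sub]
    rcases k with _ | k
    · simp [h0]
    · rw [coeff_succ_X_mul, coeff_derivative]
      push_cast; ring
  ext k
  have hE : coeff k (D * (1 - u)) = coeff k (PowerSeries.C p * (∑ j ∈ Finset.range k, u ^ (j + 2)) * (1 - u)) := by
    rw [coeff_mul, coeff_mul]
    apply Finset.sum_congr rfl
    rintro ⟨a, b⟩ hab
    rw [Finset.HasAntidiagonal.mem_antidiagonal] at hab
    simp only at hab ⊢
    congr 1
    rw [hDc, coeff_C_mul, map_sum]
    congr 1
    have : ∑ j ∈ Finset.range k, coeff a (u ^ (j + 2)) = ∑ j ∈ Finset.Ico 2 (k + 2), coeff a (u ^ j) := by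
      rw [Finset.sum_Ico_eq_sum_range]
      apply Finset.sum_congr (by simp)
      intro x _; rw [add_comm]
    rw [this]
    apply Finset.sum_subset
    · intro x; simp; omega
    · intro x _ hx2
      apply coeff_pow_lt u h0
      simp at hx2 ‹x ∈ _›
      omega
  have hG : PowerSeries.C p * (∑ j ∈ Finset.range k, u ^ (j + 2)) * (1 - u) = PowerSeries.C p * u ^ 2 - PowerSeries.C p * u ^ (k + 2) := by
    have := mul_neg_geom_sum u k
    simp only [pow_add, ← Finset.sum_mul]
    linear_combination PowerSeries.C p * u ^ 2 * this
  rw [hE, hG, map_sub, coeff_C_mul k (u ^ (k + 2)), coeff_pow_lt u h0 _ _ (by omega)]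
  simp

open PowerSeries in
lemma rec_step (p : ℝ) (u : PowerSeries ℝ)
    (h : PowerSeries.C (p + 1) * (X * d⁄dX ℝ u - u) * (1 - u) = PowerSeries.C p * u ^ 2) (n a : ℕ) (hn : 1 ≤ n) :
    (p + 1) * ((n : ℝ) - (a + 1)) * ((a : ℝ) + 2) * coeff n (u ^ (a + 1))
      = ((a : ℝ) + 1) * coeff n (u ^ (a + 2)) * ((p + 1) * n - a - 2) := by
  have hd : ∀ b : ℕ, d⁄dX ℝ (u ^ (b + 1)) = PowerSeries.C ((b : ℝ) + 1) * u ^ b * d⁄dX ℝ u := by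
    intro b
    rw [Derivation.leibniz_pow]
    simp [mul_assoc]
  have hx : ∀ v : PowerSeries ℝ, coeff n (X * d⁄dX ℝ v) = n * coeff n v := by
    intro v
    obtain ⟨m, rfl⟩ : ∃ m, n = m + 1 := ⟨n - 1, by omega⟩
    rw [coeff_succ_X_mul, coeff_derivative]
    push_cast; ring
  have e : PowerSeries.C ((p + 1) * ((a : ℝ) + 2)) * (X * d⁄dX ℝ (u ^ (a + 1)))
      - PowerSeries.C ((p + 1) * ((a : ℝ) + 1)) * (X * d⁄dX ℝ (u ^ (a + 2)))
      = PowerSeries.C (((a : ℝ) + 1) * (a + 2) * (p + 1)) * u ^ (a + 1)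
        - PowerSeries.C (((a : ℝ) + 1) * (a + 2)) * u ^ (a + 2) := by
    rw [hd a, hd (a + 1)]
    simp only [map_mul, map_add, map_one, Nat.cast_add, Nat.cast_one] at h ⊢
    have c2 : PowerSeries.C (2 : ℝ) = 2 := map_ofNat _ 2
    rw [c2]
    linear_combination (PowerSeries.C (a : ℝ) + 1) * (PowerSeries.C (a : ℝ) + 2) * u ^ a * h
  have := congrArg (coeff n) e
  simp only [map_sub, coeff_C_mul, hx] at this
  linear_combination this

/-- closed form for the Bell-polynomial recursion coefficients when `α = 1`:
`C_k = p^{k-1} Γ(kp+k-1) / ((p+1)^{2k-1} Γ(kp))`. -/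
theorem stmt7 (p : ℝ) (hp0 : 0 < p) (hp1 : p < 1)
    (C : ℕ → ℝ) (hC1 : C 1 = 1 / (p + 1))
    (hCk : ∀ k : ℕ, 2 ≤ k →
      ((k : ℝ) - 1) * (p + 1) * C k
        = ∑ j ∈ Finset.Icc 2 k, p ^ j * (j.factorial : ℝ) * bellPartial k j C) :
    ∀ k : ℕ, 1 ≤ k →
      C k = p ^ (k - 1) * Real.Gamma ((k : ℝ) * p + (k : ℝ) - 1)
        / ((p + 1) ^ (2 * k - 1) * Real.Gamma ((k : ℝ) * p)) := by
  intro n hn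
  set F : PowerSeries ℝ := PowerSeries.mk (fun k => if k = 0 then 0 else C k / (k.factorial : ℝ)) with hFdef
  have hF0 : PowerSeries.coeff 0 F = 0 := by simp [hFdef]
  have hF : ∀ k, 1 ≤ k → PowerSeries.coeff k F = C k / (k.factorial : ℝ) := by
    intro k hk
    rw [hFdef, PowerSeries.coeff_mk, if_neg (by omega)]
  set u : PowerSeries ℝ := PowerSeries.C p * F with hu
  have hu0 : PowerSeries.coeff 0 u = 0 := by rw [hu, PowerSeries.coeff_C_mul, hF0, mul_zero]
  have hup : ∀ k j, PowerSeries.coeff k (u ^ j) = p ^ j * PowerSeries.coeff k (F ^ j) := by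
    intro k j
    rw [hu, mul_pow, ← map_pow, PowerSeries.coeff_C_mul]
  have hode := ode_step p hp0 u hu0 (by
    intro k
    by_cases hk : 2 ≤ k
    · have h1 := hCk k hk
      have hkf : (k.factorial : ℝ) ≠ 0 := by positivity
      have h2 : ∑ j ∈ Finset.Icc 2 k, p ^ j * (j.factorial : ℝ) * bellPartial k j C
          = k.factorial * ∑ j ∈ Finset.Icc 2 k, PowerSeries.coeff k (u ^ j) := by
        rw [Finset.mul_sum]
        apply Finset.sum_congr rfl
        intro j hj
        rw [Finset.mem_Icc] at hj
        rw [hup, mul_assoc, bell_coeff C F hF0 hF k j (by omega) hj.2]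
        ring
      rw [h2] at h1
      rw [hu, PowerSeries.coeff_C_mul, hF k (by omega), ← hu]
      field_simp
      linear_combination h1
    · rw [Finset.Icc_eq_empty (by omega)]
      have : k = 0 ∨ k = 1 := by omega
      rcases this with rfl | rfl
      · rw [hu0]; simp
      · simp)
  have hrec := fun a => rec_step p u hode n a hn
  have hnn : PowerSeries.coeff n (u ^ n) = (p / (p + 1)) ^ n := by
    have hX : (PowerSeries.X : PowerSeries ℝ) ∣ u := by
      rw [PowerSeries.X_dvd_iff]; simpa using hu0
    have h1 : PowerSeries.coeff 1 u = p / (p + 1) := by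
      rw [hu, PowerSeries.coeff_C_mul, hF 1 le_rfl, hC1]; simp; ring
    obtain ⟨v, hv⟩ := hX
    rw [hv, mul_pow]
    have := PowerSeries.coeff_X_pow_mul (v ^ n) n 0
    rw [zero_add] at this
    rw [this]
    rw [hv] at h1
    have h3 := PowerSeries.coeff_succ_X_mul 0 v
    rw [zero_add] at h3
    rw [h3] at h1
    rw [← h1]
    simp
  have hnp : (0 : ℝ) < n * p := by positivity
  have hG : Real.Gamma ((n : ℝ) * p) ≠ 0 := (Real.Gamma_pos_of_pos hnp).ne'
  have claim : ∀ d, d < n → PowerSeries.coeff n (u ^ (n - d)) * (n * (p + 1) ^ d * d.factorial * Real.Gamma (n * p))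
      = ((n : ℝ) - d) * (p / (p + 1)) ^ n * Real.Gamma (n * p + d) := by
    intro d
    induction d with
    | zero => intro _; simp [hnn]; ring
    | succ d ih =>
      intro hd
      have ih := ih (by omega)
      obtain ⟨a, ha⟩ : ∃ a, n = a + d + 2 := ⟨n - d - 2, by omega⟩
      have hr := hrec a
      rw [show n - d = a + 2 by omega] at ih
      rw [show n - (d + 1) = a + 1 by omega]
      have hna : (n : ℝ) = a + d + 2 := by rw [ha]; push_cast; ring
      have hg : Real.Gamma ((n : ℝ) * p + (d + 1 : ℕ)) = (n * p + d) * Real.Gamma (n * p + d) := by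
        rw [← Real.Gamma_add_one (by positivity)]; push_cast; ring_nf
      rw [hg, Nat.factorial_succ]
      push_cast
      have ha2 : (a : ℝ) + 2 ≠ 0 := by positivity
      have hnd : (n : ℝ) - d = a + 2 := by rw [hna]; ring
      have hnd1 : (n : ℝ) - (d + 1) = a + 1 := by rw [hna]; ring
      have hn1 : (n : ℝ) - (a + 1) = d + 1 := by rw [hna]; ring
      have hn2 : (p + 1) * (n : ℝ) - a - 2 = n * p + d := by rw [hna]; ring
      rw [hnd] at ih
      rw [hn1, hn2] at hr
      rw [hnd1]
      apply mul_left_cancel₀ ha2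
      linear_combination (n * (p + 1) ^ d * d.factorial * Real.Gamma (n * p)) * hr + ((a : ℝ) + 1) * (n * p + d) * ih
  have hfin := claim (n - 1) (by omega)
  obtain ⟨m, rfl⟩ : ∃ m, n = m + 1 := ⟨n - 1, by omega⟩
  have e1 : m + 1 - (m + 1 - 1) = 1 := by omega
  rw [e1, pow_one, hu, PowerSeries.coeff_C_mul, hF (m + 1) hn, Nat.factorial_succ] at hfin
  simp only [Nat.add_sub_cancel] at hfin ⊢
  rw [show 2 * (m + 1) - 1 = m + (m + 1) by omega]
  have e2 : ((m + 1 : ℕ) : ℝ) * p + ((m + 1 : ℕ) : ℝ) - 1 = ((m + 1 : ℕ) : ℝ) * p + m := by push_cast; ring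
  rw [e2]
  have hp1' : p + 1 ≠ 0 := by positivity
  have hmf : (m.factorial : ℝ) ≠ 0 := by positivity
  have hm1 : ((m : ℝ) + 1) ≠ 0 := by positivity
  generalize hgg : Real.Gamma (((m + 1 : ℕ) : ℝ) * p + m) = g1 at *
  generalize hgh : Real.Gamma (((m + 1 : ℕ) : ℝ) * p) = g2 at *
  rw [eq_div_iff (by positivity)]
  push_cast at hfin
  rw [div_pow] at hfin
  field_simp at hfin
  apply mul_left_cancel₀ hp0.ne'
  rw [pow_add]
  linear_combination hfin
end

section
/- Let 0<p<1 and let r_{n,k} be the root-cluster weights for random plane-oriented recursive trees, i.e. linear preferential attachment with α=1 (φ(δ)=Γ(δ+1)/Γ(1)=δ!). Then for every integer k ≥ 1, the normalized k-th moment of the root-cluster size satisfies lim_{n→∞} m_k(n)/n^{k(p+1)/2} = 2·p^{k-1}·Γ(kp+k-1)·√π/((p+1)^{2k-1}·Γ(kp)·Γ((kp+k-1)/2)). -/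
open Finset Filter Asymptotics

namespace Port

open PowerSeries

lemma coeff_prod_tuple {K : Type*} [CommRing K] (δ N : ℕ) (F : Fin δ → PowerSeries K) :
    coeff N (∏ i, F i) = ∑ f ∈ Finset.Nat.antidiagonalTuple δ N, ∏ i, coeff (f i) (F i) := by
  classical
  rw [PowerSeries.coeff_prod]
  refine Finset.sum_nbij' (fun l => ⇑l) (fun f => Finsupp.equivFunOnFinite.symm f) ?_ ?_ ?_ ?_ ?_
  · intro l hl
    rw [Finset.mem_finsuppAntidiag] at hl
    rw [Finset.Nat.mem_antidiagonalTuple]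
    exact hl.1
  · intro f hf
    rw [Finset.Nat.mem_antidiagonalTuple] at hf
    rw [Finset.mem_finsuppAntidiag]
    exact ⟨by simpa using hf, Finset.subset_univ _⟩
  · intro l _
    ext i; simp
  · intro f _
    ext i; simp
  · intro l _
    rfl

lemma filter_lt_eq (δ s : ℕ) (h : s ≤ δ) :
    (Finset.univ.filter (fun j : Fin δ => (j : ℕ) < s)) = Finset.univ.map (Fin.castLEEmb h) := by
  ext j
  simp only [Finset.mem_filter, Finset.mem_univ, true_and, Finset.mem_map]
  constructor
  · intro hj
    exact ⟨⟨j, hj⟩, by ext; simp⟩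
  · rintro ⟨i, rfl⟩
    simp

lemma prod_split {K : Type*} [CommRing K] (δ s : ℕ) (h : s ≤ δ) (F G : Fin δ → K) :
    (∏ i : Fin s, F (Fin.castLE h i)) * ∏ j ∈ Finset.univ.filter (fun j : Fin δ => s ≤ (j : ℕ)), G j
      = ∏ j : Fin δ, if (j : ℕ) < s then F j else G j := by
  rw [Finset.prod_ite, filter_lt_eq δ s h, Finset.prod_map]
  simp only [not_lt]
  rfl

lemma sum_castLE_le (δ s : ℕ) (h : s ≤ δ) (f : Fin δ → ℕ) :
    ∑ i : Fin s, f (Fin.castLE h i) ≤ ∑ j, f j := by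
  have : ∑ i : Fin s, f (Fin.castLE h i) = ∑ j ∈ Finset.univ.map (Fin.castLEEmb h), f j := by
    rw [Finset.sum_map]; rfl
  rw [this]
  exact Finset.sum_le_sum_of_subset (Finset.subset_univ _)

lemma r_vanish {p : ℝ} {φ : ℕ → ℝ} {r : ℕ → ℕ → ℝ} {b : ℕ → ℝ} (h : clusterRec p φ r b) :
    ∀ n, 1 ≤ n → ∀ k, n < k → r n k = 0 := by
  intro n
  induction n using Nat.strong_induction_on with
  | _ n ih =>
  intro hn k hk
  rw [h.2 n k hn (by omega)]
  refine Finset.sum_eq_zero fun δ _ => Finset.sum_eq_zero fun s _ => ?_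
  rw [Finset.sum_eq_zero, mul_zero]
  intro f hf
  rw [Finset.sum_eq_zero, mul_zero]
  intro g hg
  rw [Finset.mem_filter, Finset.Nat.mem_antidiagonalTuple] at hf hg
  have hs : s.1 ≤ δ := Nat.lt_succ_iff.mp (Finset.mem_range.mp s.2)
  have hle := sum_castLE_le δ s.1 hs f
  have : ∃ i ∈ Finset.univ, f (Fin.castLE hs i) < g i := by
    apply Finset.exists_lt_of_sum_lt
    omega
  obtain ⟨i, _, hi⟩ := this
  have hfi : f (Fin.castLE hs i) ≤ n - 1 := by
    rw [← hf.1]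
    exact Finset.single_le_sum (f := f) (fun _ _ => Nat.zero_le _) (Finset.mem_univ _)
  have : r (f (Fin.castLE hs i)) (g i) = 0 :=
    ih _ (by omega) (hf.2 _) _ hi
  rw [Finset.prod_eq_zero (Finset.mem_univ i) this]
  simp

section K
variable {K : Type*} [CommRing K] [Algebra ℝ K]

/-- root cluster polynomial -/
noncomputable def rp (K : Type*) [CommRing K] [Algebra ℝ K] (r : ℕ → ℕ → ℝ) (u : K) (n : ℕ) : K :=
  ∑ j ∈ Finset.Icc 1 n, algebraMap ℝ K (r n j) * u ^ j

lemma sum_g {p : ℝ} {φ : ℕ → ℝ} {r : ℕ → ℕ → ℝ} {b : ℕ → ℝ} (h : clusterRec p φ r b) (u : K)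
    (s N : ℕ) (f : Fin s → ℕ) (hf : ∀ i, 1 ≤ f i) (hN : ∑ i, f i ≤ N) :
    ∑ m ∈ Finset.range (N + 1), algebraMap ℝ K
      (∑ g ∈ (Finset.Nat.antidiagonalTuple s m).filter (fun g => ∀ i, 1 ≤ g i), ∏ i, r (f i) (g i))
        * u ^ m = ∏ i, rp K r u (f i) := by
  classical
  unfold rp
  rw [Finset.prod_univ_sum]
  rw [← Finset.sum_fiberwise_of_maps_to (t := Finset.range (N+1)) (g := fun g : Fin s → ℕ => ∑ i, g i)]
  · refine Finset.sum_congr rfl fun m hm => ?_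
    rw [map_sum, Finset.sum_mul]
    symm
    have : ∀ g ∈ (Fintype.piFinset fun i => Finset.Icc 1 (f i)).filter (fun g => ∑ i, g i = m),
        ∏ i, (algebraMap ℝ K (r (f i) (g i)) * u ^ g i)
          = algebraMap ℝ K (∏ i, r (f i) (g i)) * u ^ m := by
      intro g hg
      rw [Finset.mem_filter] at hg
      rw [Finset.prod_mul_distrib, Finset.prod_pow_eq_pow_sum, hg.2, map_prod]
    rw [Finset.sum_congr rfl this]
    apply Finset.sum_subset
    · intro g hg
      simp only [Finset.mem_filter, Fintype.mem_piFinset, Finset.mem_Icc] at hg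
      rw [Finset.mem_filter, Finset.Nat.mem_antidiagonalTuple]
      exact ⟨hg.2, fun i => (hg.1 i).1⟩
    · intro g hg hg'
      rw [Finset.mem_filter, Finset.Nat.mem_antidiagonalTuple] at hg
      simp only [Finset.mem_filter, Fintype.mem_piFinset, Finset.mem_Icc] at hg'
      have : ∃ i, f i < g i := by
        by_contra hcon
        push Not at hcon
        exact hg' ⟨fun i => ⟨hg.2 i, hcon i⟩, hg.1⟩
      obtain ⟨i, hi⟩ := this
      rw [Finset.prod_eq_zero (Finset.mem_univ i) (r_vanish h _ (hf i) _ hi)]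
      simp
  · intro g hg
    simp only [Fintype.mem_piFinset, Finset.mem_Icc] at hg
    rw [Finset.mem_range]
    have : ∑ i, g i ≤ ∑ i, f i := Finset.sum_le_sum fun i _ => (hg i).2
    omega

lemma rp_rec {p : ℝ} {r : ℕ → ℕ → ℝ} {b : ℕ → ℝ}
    (h : clusterRec p (fun δ => (δ.factorial : ℝ)) r b) (u : K) (N : ℕ) :
    rp K r u (N + 1) = u * ∑ δ ∈ Finset.range (N + 1), ∑ s ∈ (Finset.range (δ + 1)).attach,
        algebraMap ℝ K (δ.choose s.1 : ℝ) *
          ∑ f ∈ (Finset.Nat.antidiagonalTuple δ N).filter (fun f => ∀ i, 1 ≤ f i),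
            algebraMap ℝ K ((N.factorial : ℝ) / ∏ i, ((f i).factorial : ℝ)) *
              (algebraMap ℝ K (p ^ s.1 * (1 - p) ^ (δ - s.1)) *
                  (∏ i : Fin s.1,
                    rp K r u (f (Fin.castLE (Nat.lt_succ_iff.mp (Finset.mem_range.mp s.2)) i))) *
                  ∏ j ∈ Finset.univ.filter (fun j : Fin δ => s.1 ≤ (j : ℕ)), algebraMap ℝ K (b (f j))) := by
  have e1 : rp K r u (N + 1) = u * ∑ m ∈ Finset.range (N + 1), algebraMap ℝ K (r (N+1) (m+1)) * u ^ m := by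
    unfold rp
    rw [Finset.mul_sum, Finset.range_eq_Ico, Finset.sum_Ico_eq_sum_range]
    rw [show Finset.Icc 1 (N+1) = Finset.Ico 1 (N+1+1) by ext; simp]
    rw [Finset.sum_Ico_eq_sum_range]
    refine Finset.sum_congr (by simp) fun m _ => ?_
    rw [zero_add, add_comm 1 m]
    ring
  rw [e1]
  congr 1
  have e2 : ∀ m, r (N+1) (m+1) = _ := fun m => h.2 (N+1) (m+1) (by omega) (by omega)
  simp only [e2, map_sum, Finset.sum_mul]
  rw [Finset.sum_comm]
  refine Finset.sum_congr rfl fun δ hδ => ?_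
  rw [Finset.sum_comm]
  refine Finset.sum_congr rfl fun s hs => ?_
  simp only [Nat.add_sub_cancel, map_mul, map_sum, Finset.sum_mul, Finset.mul_sum]
  rw [Finset.sum_comm]
  refine Finset.sum_congr rfl fun f hf => ?_
  rw [Finset.mem_filter, Finset.Nat.mem_antidiagonalTuple] at hf
  have hs' : s.1 ≤ δ := Nat.lt_succ_iff.mp (Finset.mem_range.mp s.2)
  have key := sum_g h u s.1 N (fun i => f (Fin.castLE hs' i)) (fun i => hf.2 _)
    (by rw [← hf.1]; exact sum_castLE_le δ s.1 hs' f)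
  try simp only [] at key
  rw [← key]
  simp only [Finset.sum_mul, Finset.mul_sum, map_sum]
  refine Finset.sum_congr rfl fun m hm => ?_
  refine Finset.sum_congr rfl fun g hg => ?_
  have : (δ.factorial : ℝ) / δ.factorial = 1 := div_self (by positivity)
  rw [this]
  simp only [map_one, map_prod]
  ring

/-- EGF of root cluster polynomial -/
noncomputable def RS (K : Type*) [CommRing K] [Algebra ℝ K] (r : ℕ → ℕ → ℝ) (u : K) : PowerSeries K :=
  PowerSeries.mk fun n => algebraMap ℝ K (1 / (n.factorial : ℝ)) * rp K r u n

/-- EGF of b -/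
noncomputable def BS (K : Type*) [CommRing K] [Algebra ℝ K] (b : ℕ → ℝ) : PowerSeries K :=
  PowerSeries.mk fun n => algebraMap ℝ K (b n / (n.factorial : ℝ))

noncomputable def WS (K : Type*) [CommRing K] [Algebra ℝ K] (p : ℝ) (r : ℕ → ℕ → ℝ) (b : ℕ → ℝ)
    (u : K) : PowerSeries K :=
  C (algebraMap ℝ K p) * RS K r u + C (algebraMap ℝ K (1 - p)) * BS K b

noncomputable def TS (K : Type*) [CommRing K] [Algebra ℝ K] (p : ℝ) (r : ℕ → ℕ → ℝ) (b : ℕ → ℝ)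
    (u : K) : PowerSeries K :=
  PowerSeries.mk fun n => coeff n (∑ δ ∈ Finset.range (n + 1), WS K p r b u ^ δ)

lemma X_dvd_WS {p : ℝ} {φ : ℕ → ℝ} {r : ℕ → ℕ → ℝ} {b : ℕ → ℝ} (h : clusterRec p φ r b) (u : K) :
    X ∣ WS K p r b u := by
  rw [PowerSeries.X_dvd_iff, ← PowerSeries.coeff_zero_eq_constantCoeff_apply]
  have hb : b 0 = 0 := by rw [h.1]; simp
  simp [WS, RS, BS, rp, hb]

lemma TS_mul {p : ℝ} {φ : ℕ → ℝ} {r : ℕ → ℕ → ℝ} {b : ℕ → ℝ} (h : clusterRec p φ r b) (u : K) :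
    (1 - WS K p r b u) * TS K p r b u = 1 := by
  ext n
  have hX := X_dvd_WS h u
  have hT : ∀ m ≤ n, coeff m (TS K p r b u)
      = coeff m (∑ δ ∈ Finset.range (n + 1), WS K p r b u ^ δ) := by
    intro m hm
    unfold TS
    rw [coeff_mk, map_sum, map_sum]
    apply Finset.sum_subset
    · intro x; simp; omega
    · intro x hx hx'
      simp at hx hx'
      have := pow_dvd_pow_of_dvd hX x
      rw [PowerSeries.X_pow_dvd_iff] at this
      exact this m (by omega)
  have : coeff n ((1 - WS K p r b u) * TS K p r b u)
      = coeff n ((1 - WS K p r b u) * (∑ δ ∈ Finset.range (n + 1), WS K p r b u ^ δ)) := by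
    rw [coeff_mul, coeff_mul]
    refine Finset.sum_congr rfl fun x hx => ?_
    rw [hT _ (by rw [Finset.HasAntidiagonal.mem_antidiagonal] at hx; omega)]
  rw [this, mul_neg_geom_sum]
  have := pow_dvd_pow_of_dvd hX (n+1)
  rw [PowerSeries.X_pow_dvd_iff] at this
  rw [map_sub, this n (by omega), sub_zero]

lemma coeff_RB {p : ℝ} {φ : ℕ → ℝ} {r : ℕ → ℕ → ℝ} {b : ℕ → ℝ} (h : clusterRec p φ r b) (u : K)
    (δ s N : ℕ) (hs : s ≤ δ) :
    ∑ f ∈ (Finset.Nat.antidiagonalTuple δ N).filter (fun f => ∀ i, 1 ≤ f i),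
      algebraMap ℝ K (1 / ∏ i, ((f i).factorial : ℝ)) *
        ((∏ i : Fin s, rp K r u (f (Fin.castLE hs i))) *
          ∏ j ∈ Finset.univ.filter (fun j : Fin δ => s ≤ (j : ℕ)), algebraMap ℝ K (b (f j)))
    = coeff N (RS K r u ^ s * BS K b ^ (δ - s)) := by
  have hb : b 0 = 0 := by rw [h.1]; simp
  have e : RS K r u ^ s * BS K b ^ (δ - s)
      = ∏ j : Fin δ, if (j : ℕ) < s then RS K r u else BS K b := by
    rw [← prod_split δ s hs (fun _ => RS K r u) (fun _ => BS K b)]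
    simp only [Finset.prod_const]
    congr 2
    · simp
    · have := Finset.card_filter_add_card_filter_not (s := (Finset.univ : Finset (Fin δ))) (fun j => (j : ℕ) < s)
      rw [filter_lt_eq δ s hs] at this
      simp at this
      omega
  rw [e, coeff_prod_tuple]
  rw [Finset.sum_filter]
  refine Finset.sum_congr rfl fun f hf => ?_
  split_ifs with h1
  · rw [prod_split δ s hs (fun j => rp K r u (f j)) (fun j => algebraMap ℝ K (b (f j)))]
    rw [one_div, ← Finset.prod_inv_distrib, map_prod, ← Finset.prod_mul_distrib]
    refine Finset.prod_congr rfl fun j _ => ?_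
    split_ifs
    · simp [RS]
    · simp only [BS, coeff_mk, ← map_mul]; congr 1; ring
  · push Not at h1
    obtain ⟨i, hi⟩ := h1
    symm
    apply Finset.prod_eq_zero (Finset.mem_univ i)
    have : f i = 0 := by omega
    rw [this]
    split_ifs
    · simp [RS, rp]
    · simp [BS, hb]

lemma RS_deriv {p : ℝ} {r : ℕ → ℕ → ℝ} {b : ℕ → ℝ}
    (h : clusterRec p (fun δ => (δ.factorial : ℝ)) r b) (u : K) :
    derivative K (RS K r u) = C u * TS K p r b u := by
  ext N
  rw [coeff_derivative, coeff_C_mul, TS, coeff_mk, RS, coeff_mk, rp_rec h u N]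
  rw [map_sum]
  have e : algebraMap ℝ K (1 / ((N+1).factorial : ℝ)) * ((N : K) + 1) = algebraMap ℝ K (1 / (N.factorial : ℝ)) := by
    have : ((N : K) + 1) = algebraMap ℝ K ((N : ℝ) + 1) := by simp
    rw [this, ← map_mul]
    congr 1
    rw [Nat.factorial_succ]; push_cast
    have : (N.factorial : ℝ) ≠ 0 := by positivity
    field_simp
  rw [mul_right_comm, e, mul_left_comm]
  congr 1
  rw [Finset.mul_sum]
  refine Finset.sum_congr rfl fun δ hδ => ?_
  unfold WS
  rw [add_pow, map_sum, ← Finset.sum_attach (Finset.range (δ+1)), Finset.mul_sum]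
  refine Finset.sum_congr rfl fun s hs => ?_
  have hs' : s.1 ≤ δ := Nat.lt_succ_iff.mp (Finset.mem_range.mp s.2)
  have e2 : (C (algebraMap ℝ K p) * RS K r u) ^ s.1 * (C (algebraMap ℝ K (1 - p)) * BS K b) ^ (δ - s.1)
      * ((δ.choose s.1 : ℕ) : PowerSeries K) = C (algebraMap ℝ K ((δ.choose s.1 : ℝ) * (p ^ s.1 * (1 - p) ^ (δ - s.1)))) *
        (RS K r u ^ s.1 * BS K b ^ (δ - s.1)) := by
    simp only [map_mul, map_pow, map_natCast, mul_pow]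
    ring
  rw [e2, coeff_C_mul, ← coeff_RB h u δ s.1 N hs', Finset.mul_sum, Finset.mul_sum, Finset.mul_sum]
  refine Finset.sum_congr rfl fun f hf => ?_
  have : algebraMap ℝ K (1 / (N.factorial : ℝ)) * algebraMap ℝ K ((N.factorial : ℝ) / ∏ i, ((f i).factorial : ℝ))
      = algebraMap ℝ K (1 / ∏ i, ((f i).factorial : ℝ)) := by
    rw [← map_mul]; congr 1
    have : (N.factorial : ℝ) ≠ 0 := by positivity
    field_simp
  rw [← this]
  simp only [map_mul]
  ring

end K

/-- extraction of the k-th coefficient in the auxiliary variable -/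
noncomputable def L (k : ℕ) (F : PowerSeries (Polynomial ℝ)) : PowerSeries ℝ :=
  PowerSeries.mk fun n => (coeff n F).coeff k

lemma L_mul (k : ℕ) (F G : PowerSeries (Polynomial ℝ)) :
    L k (F * G) = ∑ x ∈ Finset.HasAntidiagonal.antidiagonal k, L x.1 F * L x.2 G := by
  ext n
  rw [L, coeff_mk, coeff_mul, Polynomial.finsetSum_coeff, map_sum]
  simp only [Polynomial.coeff_mul, coeff_mul, L, coeff_mk]
  rw [Finset.sum_comm]

lemma L_sub (k : ℕ) (F G : PowerSeries (Polynomial ℝ)) : L k (F - G) = L k F - L k G := by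
  ext n; simp [L]

lemma L_add (k : ℕ) (F G : PowerSeries (Polynomial ℝ)) : L k (F + G) = L k F + L k G := by
  ext n; simp [L]

lemma L_C_mul (k : ℕ) (a : ℝ) (F : PowerSeries (Polynomial ℝ)) :
    L k (C (algebraMap ℝ (Polynomial ℝ) a) * F) = C a * L k F := by
  ext n; simp [L, coeff_C_mul]

lemma L_one (k : ℕ) : L k 1 = if k = 0 then 1 else 0 := by
  ext n
  simp only [L, coeff_mk, coeff_one]
  split_ifs with h1 h2 h2 <;> simp [Polynomial.coeff_one, coeff_one, h1, h2]

lemma L_deriv (k : ℕ) (F : PowerSeries (Polynomial ℝ)) :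
    L k (derivative _ F) = derivative ℝ (L k F) := by
  ext n
  simp only [L, coeff_mk, coeff_derivative]
  have : ((n : Polynomial ℝ) + 1) = Polynomial.C ((n : ℝ) + 1) := by simp
  rw [this, Polynomial.coeff_mul_C]

lemma L_BS (k : ℕ) (b : ℕ → ℝ) :
    L k (BS (Polynomial ℝ) b) = if k = 0 then BS ℝ b else 0 := by
  ext n
  simp only [L, coeff_mk, BS, Polynomial.algebraMap_apply, Polynomial.coeff_C]
  split_ifs <;> simp

lemma coeff_L_RS (k : ℕ) (r : ℕ → ℕ → ℝ) (n : ℕ) :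
    coeff n (L k (RS (Polynomial ℝ) r (1 + Polynomial.X)))
      = (∑ j ∈ Finset.Icc 1 n, (j.choose k : ℝ) * r n j) / n.factorial := by
  simp only [L, coeff_mk, RS, rp, Polynomial.algebraMap_apply, Polynomial.coeff_C_mul,
    Polynomial.finsetSum_coeff, Polynomial.coeff_one_add_X_pow]
  simp only [Algebra.algebraMap_self, RingHom.id_apply]
  rw [one_div, mul_comm, div_eq_mul_inv]
  congr 1
  exact Finset.sum_congr rfl fun j _ => mul_comm _ _

theorem core {p : ℝ} {r : ℕ → ℕ → ℝ} {b : ℕ → ℝ}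
    (h : clusterRec p (fun δ => (δ.factorial : ℝ)) r b) :
    ∃ D T : ℕ → PowerSeries ℝ,
      (∀ k n, coeff n (D k) = (∑ j ∈ Finset.Icc 1 n, (j.choose k : ℝ) * r n j) / n.factorial) ∧
      (derivative ℝ (D 0) = T 0) ∧ (∀ k, derivative ℝ (D (k+1)) = T (k+1) + T k) ∧
      ((1 - D 0) * T 0 = 1) ∧
      (∀ k, (1 - D 0) * T (k+1) = C p * ∑ x ∈ Finset.HasAntidiagonal.antidiagonal k, D (x.1+1) * T x.2) := by
  set u : Polynomial ℝ := 1 + Polynomial.X with hu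
  have hD0 : L 0 (RS (Polynomial ℝ) r u) = BS ℝ b := by
    ext n
    rw [coeff_L_RS, BS, coeff_mk, h.1]
    simp
  have hW0 : L 0 (1 - WS (Polynomial ℝ) p r b u) = 1 - L 0 (RS (Polynomial ℝ) r u) := by
    rw [L_sub, WS, L_add, L_C_mul, L_C_mul, L_one, L_BS, hD0]
    simp; ring
  have hWk : ∀ k, L (k+1) (1 - WS (Polynomial ℝ) p r b u) = - (C p * L (k+1) (RS (Polynomial ℝ) r u)) := by
    intro k
    rw [L_sub, WS, L_add, L_C_mul, L_C_mul, L_one, L_BS]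
    simp
  have hder := RS_deriv h u
  have hmul := TS_mul h u
  have hCu : ∀ F : PowerSeries (Polynomial ℝ), ∀ k, L (k+1) (C u * F) = L (k+1) F + L k F := by
    intro F k
    ext n
    simp only [L, coeff_mk, coeff_C_mul, hu, add_mul, one_mul, Polynomial.coeff_add, map_add, Polynomial.coeff_X_mul]
  have hCu0 : ∀ F : PowerSeries (Polynomial ℝ), L 0 (C u * F) = L 0 F := by
    intro F
    ext n
    simp [L, coeff_mk, coeff_C_mul, hu, add_mul]
  refine ⟨fun k => L k (RS (Polynomial ℝ) r u), fun k => L k (TS (Polynomial ℝ) p r b u),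
    fun k n => coeff_L_RS k r n, ?_, ?_, ?_, ?_⟩
  · simp only
    rw [← L_deriv, hder, hCu0]
  · intro k
    simp only
    rw [← L_deriv, hder, hCu]
  · simp only
    rw [← hW0]
    have := L_mul 0 (1 - WS (Polynomial ℝ) p r b u) (TS (Polynomial ℝ) p r b u)
    rw [hmul, L_one] at this
    simpa using this.symm
  · intro k
    simp only
    have := L_mul (k+1) (1 - WS (Polynomial ℝ) p r b u) (TS (Polynomial ℝ) p r b u)
    rw [hmul, L_one, Finset.Nat.antidiagonal_succ, Finset.sum_cons, Finset.sum_map, hW0] at this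
    simp only [Function.Embedding.prodMap, Function.Embedding.coeFn_mk, Prod.map, Function.Embedding.refl_apply,
      Nat.succ_eq_add_one, hWk] at this
    rw [if_neg (by omega)] at this
    simp only [neg_mul, Finset.sum_neg_distrib, mul_assoc, ← Finset.mul_sum] at this
    linear_combination -this

/-- coefficients of `(1-2z)^(-c/2)` -/
noncomputable def pc (c : ℝ) : ℕ → ℝ
  | 0 => 1
  | n + 1 => (2 * n + c) / (n + 1) * pc c n

noncomputable def P (c : ℝ) : PowerSeries ℝ := PowerSeries.mk (pc c)

lemma coeff_P (c : ℝ) (n : ℕ) : coeff n (P c) = pc c n := by simp [P]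

lemma pc_succ (c : ℝ) (n : ℕ) : ((n : ℝ) + 1) * pc c (n+1) = (2 * n + c) * pc c n := by
  rw [pc]; field_simp

lemma coeff_ode (F : PowerSeries ℝ) (n : ℕ) :
    coeff n ((1 - 2 * X) * derivative ℝ F) = ((n : ℝ) + 1) * coeff (n+1) F - 2 * n * coeff n F := by
  have : (1 - 2 * X) * derivative ℝ F = derivative ℝ F - C 2 * (X * derivative ℝ F) := by
    rw [show (C (2:ℝ)) = (2 : PowerSeries ℝ) from map_ofNat _ 2]; ring
  rw [this, map_sub, coeff_C_mul, coeff_derivative]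
  cases n with
  | zero => simp
  | succ n => rw [coeff_succ_X_mul, coeff_derivative]; push_cast; ring

lemma P_ode (c : ℝ) : (1 - 2 * X) * derivative ℝ (P c) = C c * P c := by
  ext n
  rw [coeff_ode, coeff_C_mul, coeff_P, coeff_P, pc_succ]; ring

lemma ode_unique (c : ℝ) (F : PowerSeries ℝ) (h0 : coeff 0 F = 1)
    (h : (1 - 2 * X) * derivative ℝ F = C c * F) : F = P c := by
  ext n
  induction n with
  | zero => rw [h0, coeff_P]; rfl
  | succ n ih =>
    have := congrArg (coeff n) h
    rw [coeff_ode, coeff_C_mul] at this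
    have h2 := pc_succ c n
    rw [coeff_P] at ih ⊢
    rw [ih] at this
    have hn : ((n:ℝ)+1) ≠ 0 := by positivity
    apply mul_left_cancel₀ hn
    rw [h2]; linarith

lemma P_mul (a b : ℝ) : P a * P b = P (a + b) := by
  apply ode_unique
  · rw [coeff_mul]; simp [coeff_P, pc]
  · rw [Derivation.leibniz, smul_eq_mul, smul_eq_mul, map_add]
    linear_combination P a * P_ode b + P b * P_ode a

lemma P_zero : P 0 = 1 := by
  symm; apply ode_unique
  · simp
  · simp

lemma P_neg_two : P (-2) = 1 - 2 * X := by
  symm; apply ode_unique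
  · simp
  · have : derivative ℝ (1 - 2 * X : PowerSeries ℝ) = C (-2) := by
      rw [show (2 : PowerSeries ℝ) = C (2:ℝ) from (map_ofNat _ 2).symm, map_sub, derivative_one,
        Derivation.leibniz]
      simp
    rw [this]; ring

lemma pc_nonneg {c : ℝ} (hc : 0 ≤ c) (n : ℕ) : 0 ≤ pc c n := by
  induction n with
  | zero => simp [pc]
  | succ n ih => rw [pc]; positivity

lemma pc_mono {a b : ℝ} (ha : 0 ≤ a) (hab : a ≤ b) (n : ℕ) : pc a n ≤ pc b n := by
  induction n with
  | zero => simp [pc]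
  | succ n ih =>
    rw [pc, pc]
    have := pc_nonneg ha n
    have hb : 0 ≤ b := ha.trans hab
    gcongr

lemma Y_eq {Y : PowerSeries ℝ} (h0 : coeff 0 Y = 1) (h : Y * derivative ℝ Y = -1) : Y = P (-1) := by
  have h2 : Y ^ 2 = P (-2) := by
    rw [P_neg_two]
    apply derivative.ext
    · rw [derivative_pow, show (2 : PowerSeries ℝ) = C (2:ℝ) from (map_ofNat _ 2).symm, map_sub, derivative_one,
        Derivation.leibniz]
      simp
      rw [mul_assoc, h]
      rw [show (C (2:ℝ)) = (2 : PowerSeries ℝ) from map_ofNat _ 2]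
      ring
    · rw [coeff_zero_eq_constantCoeff] at h0
      simp [h0]
  have h3 : (Y - P (-1)) * (Y + P (-1)) = 0 := by
    have := P_mul (-1) (-1)
    norm_num at this
    linear_combination h2 - this
  rcases mul_eq_zero.mp h3 with h4 | h4
  · exact sub_eq_zero.mp h4
  · have := congrArg (coeff 0) h4
    rw [map_add, h0, coeff_P, pc] at this
    norm_num at this

def Dom (F : PowerSeries ℝ) (b : ℝ) : Prop :=
  ∃ M : ℝ, 0 ≤ M ∧ ∀ n, |coeff n F| ≤ M * pc b n

lemma Dom.add {F G : PowerSeries ℝ} {b : ℝ} (hF : Dom F b) (hG : Dom G b) : Dom (F + G) b := by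
  obtain ⟨M, hM, h1⟩ := hF
  obtain ⟨N, hN, h2⟩ := hG
  refine ⟨M + N, by positivity, fun n => ?_⟩
  rw [map_add]
  refine (abs_add_le _ _).trans ?_
  rw [add_mul]
  exact add_le_add (h1 n) (h2 n)

lemma Dom.C_mul {F : PowerSeries ℝ} {b : ℝ} (a : ℝ) (hF : Dom F b) : Dom (C a * F) b := by
  obtain ⟨M, hM, h1⟩ := hF
  refine ⟨|a| * M, by positivity, fun n => ?_⟩
  rw [coeff_C_mul, abs_mul, mul_assoc]
  exact mul_le_mul_of_nonneg_left (h1 n) (abs_nonneg a)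

lemma Dom.zero (b : ℝ) : Dom 0 b := ⟨0, le_rfl, fun n => by simp⟩

lemma Dom.sum {ι : Type*} {s : Finset ι} {F : ι → PowerSeries ℝ} {b : ℝ} (h : ∀ i ∈ s, Dom (F i) b) :
    Dom (∑ i ∈ s, F i) b := by
  classical
  induction s using Finset.induction_on with
  | empty => simpa using Dom.zero b
  | insert i s hi ih =>
    rw [Finset.sum_insert hi]
    exact (h i (by simp)).add (ih fun j hj => h j (by simp [hj]))

lemma Dom.mono {F : PowerSeries ℝ} {a b : ℝ} (hF : Dom F a) (ha : 0 ≤ a) (hab : a ≤ b) : Dom F b := by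
  obtain ⟨M, hM, h1⟩ := hF
  exact ⟨M, hM, fun n => (h1 n).trans (mul_le_mul_of_nonneg_left (pc_mono ha hab n) hM)⟩

lemma Dom.P {a : ℝ} (ha : 0 ≤ a) : Dom (P a) a :=
  ⟨1, zero_le_one, fun n => by rw [coeff_P, abs_of_nonneg (pc_nonneg ha n), one_mul]⟩

lemma Dom.mul {F G : PowerSeries ℝ} {a b : ℝ} (hF : Dom F a) (hG : Dom G b) (ha : 0 ≤ a) :
    Dom (F * G) (a + b) := by
  obtain ⟨M, hM, h1⟩ := hF
  obtain ⟨N, hN, h2⟩ := hG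
  refine ⟨M * N, by positivity, fun n => ?_⟩
  rw [← coeff_P, ← P_mul, coeff_mul, coeff_mul, Finset.mul_sum]
  refine (Finset.abs_sum_le_sum_abs _ _).trans (Finset.sum_le_sum fun x _ => ?_)
  rw [abs_mul, coeff_P, coeff_P]
  calc _ ≤ (M * pc a x.1) * (N * pc b x.2) := by
        apply mul_le_mul (h1 _) (h2 _) (abs_nonneg _)
        have := pc_nonneg ha x.1
        positivity
    _ = _ := by ring

def Apx (ε : ℝ) (F : PowerSeries ℝ) (a c : ℝ) : Prop := Dom (F - C c * P a) (a - ε)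

lemma Apx.add {ε : ℝ} {F G : PowerSeries ℝ} {a c d : ℝ} (hF : Apx ε F a c) (hG : Apx ε G a d) :
    Apx ε (F + G) a (c + d) := by
  have := Dom.add hF hG
  unfold Apx
  convert this using 1
  rw [map_add]; ring

lemma Apx.C_mul {ε : ℝ} {F : PowerSeries ℝ} {a c : ℝ} (q : ℝ) (hF : Apx ε F a c) :
    Apx ε (C q * F) a (q * c) := by
  have := Dom.C_mul q hF
  unfold Apx
  convert this using 1
  rw [map_mul]; ring

lemma Apx.sum {ι : Type*} {s : Finset ι} {F : ι → PowerSeries ℝ} {c : ι → ℝ} {ε b : ℝ}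
    (h : ∀ i ∈ s, Apx ε (F i) b (c i)) :
    Apx ε (∑ i ∈ s, F i) b (∑ i ∈ s, c i) := by
  have := Dom.sum h
  unfold Apx
  convert this using 1
  rw [map_sum, Finset.sum_mul, Finset.sum_sub_distrib]

lemma Apx.dom {ε : ℝ} {F : PowerSeries ℝ} {a c : ℝ} (hF : Apx ε F a c) (hε : 0 ≤ ε) (ha : ε ≤ a) : Dom F a := by
  have h1 := (Dom.mono hF (by linarith) (by linarith : a - ε ≤ a)).add ((Dom.P (by linarith : 0 ≤ a)).C_mul c)
  simpa using h1

lemma Apx.mul {ε : ℝ} {F G : PowerSeries ℝ} {a b c d : ℝ} (hF : Apx ε F a c) (hG : Apx ε G b d)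
    (hε : 0 ≤ ε) (ha : ε ≤ a) (hb : ε ≤ b) : Apx ε (F * G) (a + b) (c * d) := by
  have h1 := Dom.mul hF (hG.dom hε hb) (by linarith)
  have h2 := (Dom.mul (Dom.P (by linarith : 0 ≤ a)) hG (by linarith)).C_mul c
  rw [show a - ε + b = a + b - ε by ring] at h1
  rw [show a + (b - ε) = a + b - ε by ring] at h2
  have := h1.add h2
  unfold Apx
  convert this using 1
  rw [← P_mul, map_mul]; ring

lemma Apx.P_mul {ε : ℝ} {F : PowerSeries ℝ} {a c : ℝ} (hF : Apx ε F a c) {q : ℝ} (hq : 0 ≤ q) :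
    Apx ε (P q * F) (q + a) c := by
  have := Dom.mul (Dom.P hq) hF hq
  unfold Apx
  rw [show q + a - ε = q + (a - ε) by ring]
  convert this using 1
  rw [← Port.P_mul]; ring

lemma Dom.apx {ε : ℝ} {F : PowerSeries ℝ} {a : ℝ} (h : Dom F (a - ε)) : Apx ε F a 0 := by
  unfold Apx; simpa using h

/-- solving the linear ODE -/
lemma ode_dom {p b : ℝ} (hp : 0 ≤ p) (hb : p < b) {E G : PowerSeries ℝ} (h0 : coeff 0 E = 0)
    (h : (1 - 2 * X) * derivative ℝ E - C p * E = G) (hG : Dom G b) : Dom E b := by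
  obtain ⟨M, hM, h1⟩ := hG
  have hbp : 0 < b - p := by linarith
  refine ⟨M / (b - p), by positivity, fun n => ?_⟩
  induction n with
  | zero => rw [h0, abs_zero]; simp [pc]; positivity
  | succ n ih =>
    have h2 := congrArg (coeff n) h
    rw [map_sub, coeff_ode, coeff_C_mul] at h2
    have h3 := pc_succ b n
    have hn : (0:ℝ) < (n:ℝ) + 1 := by positivity
    have h4 : ((n:ℝ)+1) * coeff (n+1) E = (2 * n + p) * coeff n E + coeff n G := by linarith
    apply le_of_mul_le_mul_left _ hn
    calc ((n:ℝ)+1) * |coeff (n+1) E| = |((n:ℝ)+1) * coeff (n+1) E| := by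
          rw [abs_mul, abs_of_pos hn]
      _ ≤ (2 * n + p) * |coeff n E| + |coeff n G| := by
          rw [h4]
          refine (abs_add_le _ _).trans ?_
          rw [abs_mul, abs_of_nonneg (by positivity : 0 ≤ 2 * (n:ℝ) + p)]
      _ ≤ (2 * n + p) * (M / (b-p) * pc b n) + M * pc b n := by
          gcongr
          exact h1 n
      _ = M / (b - p) * ((2 * n + b) * pc b n) := by field_simp; ring
      _ = _ := by rw [← h3]; ring

lemma ode_apx {ε p a g c : ℝ} (hp : 0 ≤ p) (hb : p < a - ε) {D G : PowerSeries ℝ} (h0 : coeff 0 D = 0)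
    (h : (1 - 2 * X) * derivative ℝ D - C p * D = G) (hG : Apx ε G a g) (hg : g = (a - p) * c) :
    Apx ε D a c := by
  have h1 : Dom (D - C c * (P a - P p)) (a - ε) := by
    refine ode_dom hp hb (G := G - C g * P a) ?_ ?_ hG
    · simp [coeff_C_mul, h0, coeff_P, pc, -coeff_zero_eq_constantCoeff]
    · rw [← h, hg]
      simp only [map_sub, Derivation.leibniz, smul_eq_mul, derivative_C, map_mul]
      linear_combination -(C c) * P_ode a + (C c) * P_ode p
  have h2 : Dom (P p) (a - ε) := (Dom.P hp).mono hp hb.le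
  have := h1.add (h2.C_mul (-c))
  unfold Apx
  convert this using 1
  rw [map_neg]; ring

lemma dom_Y {q : ℝ} (hq : 0 < q) : Dom (P (-1)) q := by
  refine ⟨1 + 1 / q, by positivity, fun n => ?_⟩
  rw [coeff_P]
  have hq1 : 1 ≤ (1 + 1/q) * q := by
    have : (1 + 1/q) * q = q + 1 := by field_simp
    rw [this]; linarith
  cases n with
  | zero => simp [pc]; positivity
  | succ n =>
    induction n with
    | zero =>
      rw [pc, pc, pc, pc]; norm_num
      rw [one_div] at hq1
      linarith
    | succ n ih =>
      rw [pc.eq_2 (-1) (n+1), pc.eq_2 q (n+1), abs_mul]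
      have hq0 := pc_nonneg hq.le (n+1)
      have e : |(2 * ((n+1 : ℕ) : ℝ) + -1) / (((n+1:ℕ):ℝ) + 1)| ≤ (2 * ((n+1:ℕ):ℝ) + q) / (((n+1:ℕ):ℝ) + 1) := by
        rw [abs_of_nonneg]
        · gcongr; linarith
        · apply div_nonneg <;> push_cast <;> linarith [(Nat.cast_nonneg n : (0:ℝ) ≤ n)]
      calc _ ≤ (2 * ((n+1:ℕ):ℝ) + q) / (((n+1:ℕ):ℝ) + 1) * ((1 + 1/q) * pc q (n+1)) := by
            apply mul_le_mul e ih (abs_nonneg _)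
            positivity
        _ = _ := by ring

/-- the main asymptotic expansion -/
theorem main_apx {p : ℝ} (hp : 0 < p) (D T : ℕ → PowerSeries ℝ) (c e : ℕ → ℝ)
    (hz : ∀ k, coeff 0 (D k) = 0)
    (h0 : derivative ℝ (D 0) = T 0) (h1 : ∀ k, derivative ℝ (D (k+1)) = T (k+1) + T k)
    (h2 : (1 - D 0) * T 0 = 1)
    (h3 : ∀ k, (1 - D 0) * T (k+1) = C p * ∑ x ∈ Finset.HasAntidiagonal.antidiagonal k, D (x.1+1) * T x.2)
    (hc1 : c 1 = 1 / (1 + p)) (he1 : e 1 = p * c 1)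
    (he : ∀ j, e (j+2) = p * (c (j+2) + ∑ x ∈ Finset.HasAntidiagonal.antidiagonal j, c (x.1+1) * e (x.2+1)))
    (hc : ∀ j : ℕ, ((j:ℝ)+1) * (1 + p) * c (j+2)
      = p * ∑ x ∈ Finset.HasAntidiagonal.antidiagonal j, c (x.1+1) * e (x.2+1)) :
    D 0 = 1 - P (-1) ∧ ∀ k : ℕ, Apx (p/2) (D (k+1)) (((k:ℝ)+1) * (1+p) - 1) (c (k+1)) := by
  have hY : 1 - D 0 = P (-1) := by
    apply Y_eq
    · rw [map_sub, hz]; simp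
    · rw [map_sub, derivative_one, h0]
      linear_combination -h2
  have hYY : P (-1) * P (-1) = 1 - 2 * X := by
    rw [P_mul, ← P_neg_two]; norm_num
  have hY1 : P 1 * P (-1) = 1 := by
    rw [P_mul, ← P_zero]; norm_num
  set U : ℕ → PowerSeries ℝ := fun k => P (-1) * T k with hU
  have hT : ∀ k, T k = P 1 * U k := by
    intro k; simp only [hU]; linear_combination -T k * hY1
  have hU0 : U 0 = 1 := by simp only [hU]; rw [← hY, h2]
  set V : ℕ → PowerSeries ℝ := fun k => match k with
    | 0 => 0
    | j+1 => ∑ x ∈ Finset.HasAntidiagonal.antidiagonal j, D (x.1+1) * U (x.2+1) with hV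
  have hsum : ∀ k, ∑ x ∈ Finset.HasAntidiagonal.antidiagonal k, D (x.1+1) * T x.2 = P 1 * (D (k+1) + V k) := by
    intro k
    have : ∑ x ∈ Finset.HasAntidiagonal.antidiagonal k, D (x.1+1) * T x.2
        = P 1 * ∑ x ∈ Finset.HasAntidiagonal.antidiagonal k, D (x.1+1) * U x.2 := by
      rw [Finset.mul_sum]
      refine Finset.sum_congr rfl fun x _ => ?_
      rw [hT]; ring
    rw [this]
    congr 1
    cases k with
    | zero => simp [hV, hU0]
    | succ j =>
      rw [Finset.Nat.antidiagonal_succ', Finset.sum_cons, Finset.sum_map, hU0, mul_one]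
      rfl
  have hUs : ∀ k, U (k+1) = C p * (P 1 * (D (k+1) + V k)) := by
    intro k
    rw [← hsum, ← h3, hY]
  have hode : ∀ k, (1 - 2 * X) * derivative ℝ (D (k+1)) = P (-1) * (U (k+1) + U k) := by
    intro k
    rw [h1, ← hYY]; simp only [hU]; ring
  have hodes : ∀ j, (1 - 2 * X) * derivative ℝ (D (j+2)) - C p * D (j+2)
      = C p * V (j+1) + C p * (D (j+1) + V j) := by
    intro j
    have := hode (j+1)
    rw [hUs, hUs] at this
    rw [show j + 2 = j + 1 + 1 from rfl, this]
    linear_combination (C p * (D (j+1+1) + V (j+1)) + C p * (D (j+1) + V j)) * hY1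
  have hp2 : 0 ≤ p / 2 := by positivity
  have main : ∀ k : ℕ, Apx (p/2) (D (k+1)) (((k:ℝ)+1) * (1+p) - 1) (c (k+1)) ∧
      Apx (p/2) (U (k+1)) (((k:ℝ)+1) * (1+p)) (e (k+1)) := by
    intro k
    induction k using Nat.strong_induction_on with
    | _ k ih =>
    cases k with
    | zero =>
      have hD1 : D 1 = C (1/(1+p)) * (P p - P (-1)) := by
        have hdiff : ∀ n, coeff n (D 1 - C (1/(1+p)) * (P p - P (-1))) = 0 := by
          have e1 : (1 - 2 * X) * derivative ℝ (D 1 - C (1/(1+p)) * (P p - P (-1)))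
              - C p * (D 1 - C (1/(1+p)) * (P p - P (-1))) = 0 := by
            have a1 := hode 0
            rw [hUs, hU0] at a1
            simp only [hV, zero_add, add_zero] at a1
            simp only [map_sub, Derivation.leibniz, smul_eq_mul, derivative_C]
            have a2 : C (1/(1+p)) * (1 + C p) = (1 : PowerSeries ℝ) := by
              rw [← map_one C, ← map_add, ← map_mul]
              congr 1
              field_simp
            have a3 := P_ode (-1)
            have a4 := P_ode p
            rw [map_neg, map_one] at a3
            linear_combination a1 - C (1/(1+p)) * a4 + C (1/(1+p)) * a3 + C p * D 1 * hY1 - P (-1) * a2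
          intro n
          induction n with
          | zero =>
            rw [map_sub, hz, coeff_C_mul, map_sub, coeff_P, coeff_P]; simp [pc]
          | succ n ihn =>
            have := congrArg (coeff n) e1
            rw [map_sub, coeff_ode, coeff_C_mul, ihn] at this
            simp only [mul_zero, sub_zero, map_zero, mul_eq_zero] at this
            rcases this with h | h
            · exfalso; have : (0:ℝ) < (n:ℝ) + 1 := by positivity
              linarith
            · exact h
        have : D 1 - C (1/(1+p)) * (P p - P (-1)) = 0 := by ext n; rw [hdiff]; simp
        linear_combination this
      have hA : Apx (p/2) (D 1) p (c 1) := by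
        unfold Apx
        rw [show p - p/2 = p/2 by ring]
        have := (dom_Y (by positivity : 0 < p/2)).C_mul (-(1/(1+p)))
        convert this using 1
        rw [hD1, hc1, map_neg]; ring
      constructor
      · simp only [zero_add, Nat.cast_zero]
        convert hA using 1; ring
      · simp only [zero_add]
        have := (hA.P_mul zero_le_one).C_mul p
        rw [← he1] at this
        have e2 := hUs 0
        simp only [hV, zero_add, add_zero] at e2
        rw [e2]
        convert this using 1; push_cast; ring
    | succ j =>
      have hVa : ∀ i, i ≤ j → Apx (p/2) (V (i+1)) (((i:ℝ)+2)*(1+p) - 1)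
          (∑ x ∈ Finset.HasAntidiagonal.antidiagonal i, c (x.1+1) * e (x.2+1)) := by
        intro i hi
        simp only [hV]
        apply Apx.sum
        intro x hx
        rw [Finset.HasAntidiagonal.mem_antidiagonal] at hx
        have b1 := (ih x.1 (by omega)).1
        have b2 := (ih x.2 (by omega)).2
        have hx1 : (0:ℝ) ≤ (x.1:ℝ) := by positivity
        have hx2 : (0:ℝ) ≤ (x.2:ℝ) := by positivity
        have := b1.mul b2 hp2 (by nlinarith) (by nlinarith)
        convert this using 1
        rw [← hx]; push_cast; ring
      have hj : (0:ℝ) ≤ (j:ℝ) := by positivity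
      have hlow : Dom (D (j+1) + V j) (((j:ℝ)+1) * (1+p) - 1) := by
        apply Dom.add
        · exact (ih j (by omega)).1.dom hp2 (by nlinarith)
        · cases j with
          | zero => exact Dom.zero _
          | succ i =>
            have hi : (0:ℝ) ≤ (i:ℝ) := by positivity
            have := (hVa i (by omega)).dom hp2 (by nlinarith)
            convert this using 1; push_cast; ring
      have hlow2 : Apx (p/2) (D (j+1) + V j) (((j:ℝ)+2) * (1+p) - 1) 0 := by
        apply Dom.apx
        exact hlow.mono (by nlinarith) (by nlinarith)
      have hG := ((hVa j le_rfl).C_mul p).add (hlow2.C_mul p)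
      have hDa : Apx (p/2) (D (j+2)) (((j:ℝ)+2) * (1+p) - 1) (c (j+2)) := by
        refine ode_apx hp.le (by nlinarith) (hz _) (hodes j) hG ?_
        rw [← hc]; ring
      have hUa : Apx (p/2) (U (j+2)) (((j:ℝ)+2) * (1+p)) (e (j+2)) := by
        have := ((hDa.add (hVa j le_rfl)).P_mul zero_le_one).C_mul p
        rw [← he] at this
        rw [show j + 2 = j+1+1 from rfl, hUs]
        convert this using 1; ring
      constructor
      · convert hDa using 1; push_cast; ring
      · convert hUa using 1; push_cast; ring
  exact ⟨by rw [← hY]; ring, fun k => (main k).1⟩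

/-- Rothe--Hagen polynomials -/
noncomputable def RA (b : ℝ) : ℕ → Polynomial ℝ
  | 0 => 1
  | n + 1 => Polynomial.C (1 / ((n+1).factorial : ℝ)) * Polynomial.X *
      (descPochhammer ℝ n).comp (Polynomial.X + Polynomial.C (b * (n+1) - 1))

lemma RA_eval_succ (b a : ℝ) (n : ℕ) : (RA b (n+1)).eval a =
    a / ((n+1).factorial : ℝ) * (descPochhammer ℝ n).eval (a + b * (n+1) - 1) := by
  rw [RA]
  simp only [Polynomial.eval_mul, Polynomial.eval_C, Polynomial.eval_X, Polynomial.eval_comp,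
    Polynomial.eval_add]
  rw [show a + (b * ((n:ℝ)+1) - 1) = a + b * (n+1) - 1 by ring]
  ring

lemma dp_left (n : ℕ) (x : ℝ) : (descPochhammer ℝ (n+1)).eval (x+1) = (x+1) * (descPochhammer ℝ n).eval x := by
  rw [descPochhammer_succ_left]; simp

lemma RA_step (b a : ℝ) (n : ℕ) :
    (RA b (n+1)).eval (a+1) = (RA b (n+1)).eval a + (RA b n).eval (a + b) := by
  cases n with
  | zero =>
    rw [RA_eval_succ, RA_eval_succ]; simp [RA]
  | succ m =>
    rw [RA_eval_succ, RA_eval_succ, RA_eval_succ]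
    have e1 := dp_left m (a + b * (((m+1:ℕ):ℝ)+1) - 1)
    have e2 := descPochhammer_succ_eval (S := ℝ) m (a + b * (((m+1:ℕ):ℝ)+1) - 1)
    rw [show a + 1 + b * (((m+1:ℕ):ℝ)+1) - 1 = a + b * (((m+1:ℕ):ℝ)+1) - 1 + 1 by ring, e1, e2]
    rw [show a + b + b * ((m:ℝ)+1) - 1 = a + b * (((m+1:ℕ):ℝ)+1) - 1 by push_cast; ring]
    generalize (descPochhammer ℝ m).eval (a + b * (((m+1:ℕ):ℝ)+1) - 1) = d
    rw [Nat.factorial_succ (m+1)]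
    have : ((m+1).factorial : ℝ) ≠ 0 := by positivity
    push_cast
    field_simp
    ring

theorem rothe (b : ℝ) : ∀ (n : ℕ) (a c : ℝ),
    ∑ x ∈ Finset.HasAntidiagonal.antidiagonal n, (RA b x.1).eval a * (RA b x.2).eval c = (RA b n).eval (a + c) := by
  intro n
  induction n with
  | zero => intro a c; simp [RA]
  | succ n ih =>
    intro a c
    have hzero : ∀ d, (RA b (d+1)).eval 0 = 0 := by intro d; rw [RA_eval_succ]; simp
    have hnat : ∀ m : ℕ, ∑ x ∈ Finset.HasAntidiagonal.antidiagonal (n+1), (RA b x.1).eval (m:ℝ) * (RA b x.2).eval c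
        = (RA b (n+1)).eval ((m:ℝ) + c) := by
      intro m
      induction m with
      | zero =>
        rw [Finset.Nat.antidiagonal_succ, Finset.sum_cons, Finset.sum_map]
        simp [hzero, RA.eq_1]
      | succ m ihm =>
        rw [Finset.Nat.antidiagonal_succ, Finset.sum_cons, Finset.sum_map] at ihm ⊢
        simp only [Function.Embedding.prodMap, Function.Embedding.coeFn_mk, Prod.map, Function.Embedding.refl_apply,
          Nat.succ_eq_add_one, RA.eq_1, Polynomial.eval_one] at ihm ⊢
        push_cast
        simp only [RA_step, add_mul, Finset.sum_add_distrib]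
        rw [ih, ← add_assoc, ihm]
        rw [show (m:ℝ) + 1 + c = (m + c) + 1 by ring, RA_step]
        congr 2; ring
    set Q : Polynomial ℝ := ∑ x ∈ Finset.HasAntidiagonal.antidiagonal (n+1), RA b x.1 * Polynomial.C ((RA b x.2).eval c)
      - (RA b (n+1)).comp (Polynomial.X + Polynomial.C c) with hQ
    have hev : ∀ t, Q.eval t = ∑ x ∈ Finset.HasAntidiagonal.antidiagonal (n+1), (RA b x.1).eval t * (RA b x.2).eval c
        - (RA b (n+1)).eval (t + c) := by
      intro t; simp [hQ, Polynomial.eval_finsetSum]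
    have hQ0 : Q = 0 := by
      apply Polynomial.eq_zero_of_infinite_isRoot
      apply Set.infinite_of_injective_forall_mem (f := fun m : ℕ => (m : ℝ)) Nat.cast_injective
      intro m
      simp only [Set.mem_ofPred_eq, Polynomial.IsRoot]
      rw [hev, hnat]; ring
    have := hev a
    rw [hQ0] at this
    simp only [Polynomial.eval_zero] at this
    linarith

noncomputable def cc (p : ℝ) : ℕ → ℝ
  | 0 => 0
  | m + 1 => (p / (1+p)^2) ^ m / (1+p) * (RA (1+p) m).eval p

lemma RA_key (p : ℝ) (j : ℕ) : ((j:ℝ)+1) * (RA (1+p) (j+1)).eval p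
    = ((1+p) * (j+2) / 2 - 1) * (RA (1+p) j).eval (p + p) := by
  cases j with
  | zero => rw [RA_eval_succ]; simp [RA]
  | succ m =>
    rw [RA_eval_succ, RA_eval_succ, descPochhammer_succ_eval]
    rw [show p + p + (1+p) * ((m:ℝ)+1) - 1 = p + (1+p) * (((m+1:ℕ):ℝ) + 1) - 1 - 1 by push_cast; ring]
    have e1 := dp_left m (p + (1+p) * (((m+1:ℕ):ℝ) + 1) - 1 - 1)
    rw [sub_add_cancel, descPochhammer_succ_eval] at e1
    rw [e1]
    generalize (descPochhammer ℝ m).eval (p + (1+p) * (((m+1:ℕ):ℝ) + 1) - 1 - 1) = d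
    rw [Nat.factorial_succ (m+1)]
    have : ((m+1).factorial : ℝ) ≠ 0 := by positivity
    push_cast
    field_simp
    ring

lemma cc_conv {p : ℝ} (hp : 0 < p) (j : ℕ) : (1+p) * ((j:ℝ)+1) * cc p (j+2)
    = p * ((1+p) * (j+2) / 2 - 1) * ∑ x ∈ Finset.HasAntidiagonal.antidiagonal j, cc p (x.1+1) * cc p (x.2+1) := by
  have e : ∑ x ∈ Finset.HasAntidiagonal.antidiagonal j, cc p (x.1+1) * cc p (x.2+1)
      = (p / (1+p)^2) ^ j / (1+p)^2 * (RA (1+p) j).eval (p + p) := by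
    rw [← rothe, Finset.mul_sum]
    refine Finset.sum_congr rfl fun x hx => ?_
    rw [Finset.HasAntidiagonal.mem_antidiagonal] at hx
    rw [cc, cc, ← hx, pow_add]
    field_simp
  rw [e, show j + 2 = j+1+1 from rfl, cc, pow_succ]
  have k := RA_key p j
  have h1 : (1 + p) ≠ 0 := by positivity
  calc _ = (p / (1+p)^2) ^ j * (p / (1+p)^2) * (((j:ℝ)+1) * (RA (1+p) (j+1)).eval p) := by
        field_simp
    _ = _ := by rw [k]; field_simp

theorem exists_e {p : ℝ} (hp : 0 < p) : ∃ e : ℕ → ℝ, e 1 = p * cc p 1 ∧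
    (∀ j, e (j+2) = p * (cc p (j+2) + ∑ x ∈ Finset.HasAntidiagonal.antidiagonal j, cc p (x.1+1) * e (x.2+1))) ∧
    (∀ j : ℕ, ((j:ℝ)+1) * (1 + p) * cc p (j+2)
      = p * ∑ x ∈ Finset.HasAntidiagonal.antidiagonal j, cc p (x.1+1) * e (x.2+1)) := by
  set h : PowerSeries ℝ := PowerSeries.mk (cc p) with hh
  set h1 : PowerSeries ℝ := PowerSeries.mk (fun n => cc p (n+1)) with hh1
  have hX : h = X * h1 := by
    ext n
    cases n with
    | zero => simp [hh, cc]
    | succ n => rw [coeff_succ_X_mul]; simp [hh, hh1]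
  set E : PowerSeries ℝ := (1 - C p * h)⁻¹ with hE
  have hinv : (1 - C p * h) * E = 1 := by
    apply PowerSeries.mul_inv_cancel
    rw [hX]; simp
  have hE1 : E - 1 = X * (C p * (h1 * E)) := by
    rw [hX] at hinv; linear_combination hinv
  have he0 : coeff 0 E = 1 := by
    have : coeff 0 (E - 1) = 0 := by rw [hE1]; simp
    rw [map_sub] at this; simp at this ⊢; linarith
  have hes : ∀ k, coeff (k+1) E = p * ∑ x ∈ Finset.HasAntidiagonal.antidiagonal k, cc p (x.1+1) * coeff x.2 E := by
    intro k
    have := congrArg (coeff (k+1)) hE1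
    rw [coeff_succ_X_mul, coeff_C_mul, coeff_mul, map_sub, coeff_one, if_neg (by omega), sub_zero] at this
    rw [this]
    simp [hh1]
  have hode : C (1+p) * (X * derivative ℝ h - h) = C p * h * (E - 1) := by
    have hsq : C (1+p) * (X * derivative ℝ h - h)
        = C (p * (1+p)/2) * (X * derivative ℝ (h^2)) - C p * h^2 := by
      ext n
      have hsq2 : h^2 = X^2 * h1^2 := by rw [hX]; ring
      have hθ : ∀ F : PowerSeries ℝ, coeff n (X * derivative ℝ F) = n * coeff n F := by
        intro F
        cases n with
        | zero => simp
        | succ n => rw [coeff_succ_X_mul, coeff_derivative]; push_cast; ring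
      simp only [coeff_C_mul, map_sub, hθ]
      rcases n with _ | _ | j
      · rw [hsq2, hX]; simp
      · rw [hsq2, coeff_X_pow_mul']; simp
      · rw [hsq2, show j + 1 + 1 = j + 2 from rfl, coeff_X_pow_mul, sq, coeff_mul]
        have := cc_conv hp j
        simp only [hh, hh1, coeff_mk]
        push_cast
        linear_combination this
    have hd2 : derivative ℝ (h^2) = 2 * h * derivative ℝ h := by
      rw [derivative_pow]; simp
    rw [hd2] at hsq
    have hC : C (p * (1+p)/2) * 2 = C p * (C (1+p) : PowerSeries ℝ) := by
      rw [show (2 : PowerSeries ℝ) = C (2:ℝ) from (map_ofNat _ 2).symm, ← map_mul, ← map_mul]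
      congr 1; ring
    have hC2 : C (1+p) = (1 : PowerSeries ℝ) + C p := by simp
    have hmain : (1 - C p * h) * (C (1+p) * (X * derivative ℝ h - h)) = (C p * h)^2 := by
      linear_combination hsq + h * X * derivative ℝ h * hC + C p * h^2 * hC2
    linear_combination E * hmain - (C (1+p) * (X * derivative ℝ h - h) + C p * h) * hinv
  have hsplit : ∀ j, ∑ x ∈ Finset.HasAntidiagonal.antidiagonal (j+1), cc p (x.1+1) * coeff x.2 E
      = cc p (j+2) + ∑ x ∈ Finset.HasAntidiagonal.antidiagonal j, cc p (x.1+1) * coeff (x.2+1) E := by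
    intro j
    rw [Finset.Nat.antidiagonal_succ', Finset.sum_cons, Finset.sum_map]
    simp only [he0, mul_one]
    rfl
  refine ⟨fun n => coeff n E, ?_, ?_, ?_⟩
  · have := hes 0
    simpa [he0, -coeff_zero_eq_constantCoeff] using this
  · intro j
    simp only
    rw [show j + 2 = j+1+1 from rfl, hes, hsplit]
  · intro j
    have := congrArg (coeff (j+2)) hode
    have e2 : C p * h * (E - 1) = C p * (X * (h1 * E - h1)) := by rw [hX]; ring
    rw [e2, coeff_C_mul, coeff_C_mul, coeff_succ_X_mul, map_sub, map_sub, coeff_succ_X_mul, coeff_derivative] at this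
    rw [coeff_mul] at this
    simp only [hh1, hh, coeff_mk] at this
    rw [hsplit] at this
    simp only
    push_cast at this
    linear_combination this

lemma dp_gamma {x : ℝ} (hx : 0 < x) (m : ℕ) :
    (descPochhammer ℝ m).eval (x + m) * Real.Gamma (x + 1) = Real.Gamma (x + m + 1) := by
  induction m with
  | zero => simp
  | succ m ih =>
    have h := dp_left m (x + m)
    push_cast
    rw [← add_assoc, h, mul_assoc, ih]
    rw [Real.Gamma_add_one (s := x + m + 1) (by positivity)]

lemma cc_closed {p : ℝ} (hp : 0 < p) (K : ℕ) :
    ((K+1).factorial : ℝ) * cc p (K+1) = p ^ K * Real.Gamma (((K:ℝ)+1) * p + K)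
      / ((p+1)^(2*K+1) * Real.Gamma (((K:ℝ)+1)*p)) := by
  have key : ((K+1).factorial : ℝ) * (RA (1+p) K).eval p
      = Real.Gamma (((K:ℝ)+1) * p + K) / Real.Gamma (((K:ℝ)+1)*p) := by
    have hx : 0 < ((K:ℝ)+1)*p := by positivity
    have hG := (Real.Gamma_pos_of_pos hx).ne'
    rw [eq_div_iff hG]
    cases K with
    | zero => simp [RA]
    | succ m =>
      rw [RA_eval_succ]
      have h := dp_gamma hx m
      rw [Real.Gamma_add_one hx.ne'] at h
      rw [show p + (1+p) * ((m:ℝ)+1) - 1 = (((m+1:ℕ):ℝ)+1)*p + m by push_cast; ring]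
      rw [show (((m+1:ℕ):ℝ)+1)*p + ((m+1:ℕ):ℝ) = (((m+1:ℕ):ℝ)+1)*p + m + 1 by push_cast; ring, ← h]
      rw [Nat.factorial_succ (m+1)]
      have : ((m+1).factorial : ℝ) ≠ 0 := by positivity
      push_cast
      field_simp
  rw [cc]
  have h1 : (1 + p) ≠ 0 := by positivity
  have hx : 0 < ((K:ℝ)+1)*p := by positivity
  have hG := (Real.Gamma_pos_of_pos hx).ne'
  calc _ = (p / (1+p)^2) ^ K / (1+p) * (((K+1).factorial : ℝ) * (RA (1+p) K).eval p) := by ring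
    _ = _ := by
      rw [key, div_pow, ← pow_mul, pow_succ, add_comm p 1]
      field_simp

lemma pc_gamma (c : ℝ) (hc : ∀ i : ℕ, c / 2 + i ≠ 0) {n : ℕ} (hn : 1 ≤ n) :
    pc c n * (Real.GammaSeq (c/2) n * (c/2 + n)) = 2 ^ n * (n:ℝ) ^ (c/2) := by
  have h1 : ∀ n : ℕ, pc c n * n.factorial = 2 ^ n * ∏ j ∈ Finset.range n, (c/2 + j) := by
    intro n
    induction n with
    | zero => simp [pc]
    | succ n ih =>
      rw [Finset.prod_range_succ, Nat.factorial_succ]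
      have := pc_succ c n
      push_cast
      calc _ = (((n:ℝ)+1) * pc c (n+1)) * n.factorial := by ring
        _ = (2 * n + c) * (pc c n * n.factorial) := by rw [this]; ring
        _ = _ := by rw [ih]; ring
  have hprod : ∏ j ∈ Finset.range n, (c/2 + j) ≠ 0 := Finset.prod_ne_zero_iff.mpr fun i _ => hc i
  rw [Real.GammaSeq, Finset.prod_range_succ]
  have h2 := h1 n
  have := hc n
  generalize (∏ j ∈ Finset.range n, (c/2 + (j:ℝ))) = q at *
  generalize c/2 + (n:ℝ) = w at *
  generalize (n:ℝ) ^ (c/2) = y at *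
  generalize pc c n = z at *
  have e : y * (n.factorial : ℝ) / (q * w) * w = y * n.factorial / q := by
    field_simp
  rw [e, mul_div_assoc', div_eq_iff hprod]
  linear_combination y * h2

lemma gs_ne (s : ℝ) (hc : ∀ i : ℕ, s + i ≠ 0) {n : ℕ} (hn : 1 ≤ n) : Real.GammaSeq s n ≠ 0 := by
  have hprod : ∏ j ∈ Finset.range (n+1), (s + j) ≠ 0 := Finset.prod_ne_zero_iff.mpr fun i _ => hc i
  rw [Real.GammaSeq]
  have : (0:ℝ) < n := by exact_mod_cast hn
  positivity

lemma neg_half_ne (i : ℕ) : (-1:ℝ)/2 + i ≠ 0 := by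
  intro h
  have h2 : (2 * i : ℝ) = 1 := by linarith
  have h3 : 2 * i = 1 := by exact_mod_cast h2
  omega

lemma pc_ratio {a : ℝ} (ha : 0 < a) :
    Tendsto (fun n : ℕ => pc a n / pc (-1) n / (n:ℝ) ^ ((a+1)/2)) atTop
      (nhds (Real.Gamma (-1/2) / Real.Gamma (a/2))) := by
  have hlin : ∀ s : ℝ, Tendsto (fun n : ℕ => (s + n) / (n:ℝ)) atTop (nhds 1) := by
    intro s
    have h1 : Tendsto (fun n : ℕ => s / (n:ℝ) + 1) atTop (nhds (0 + 1)) :=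
      (tendsto_const_div_atTop_nhds_zero_nat s).add_const 1
    rw [zero_add] at h1
    refine h1.congr' ?_
    filter_upwards [eventually_ge_atTop 1] with n hn
    have : (0:ℝ) < n := by exact_mod_cast hn
    field_simp
  have hG : Real.Gamma (a/2) ≠ 0 := (Real.Gamma_pos_of_pos (by positivity)).ne'
  have t1 := ((Real.GammaSeq_tendsto_Gamma (-1/2)).mul (hlin (-1/2))).div
    ((Real.GammaSeq_tendsto_Gamma (a/2)).mul (hlin (a/2))) (by simpa using hG)
  rw [mul_one, mul_one] at t1
  refine t1.congr' ?_
  filter_upwards [eventually_ge_atTop 1] with n hn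
  have hn0 : (0:ℝ) < n := by exact_mod_cast hn
  have ha' : ∀ i : ℕ, a/2 + i ≠ 0 := fun i => by positivity
  have e1 := pc_gamma a ha' hn
  have e2 := pc_gamma (-1) neg_half_ne hn
  have g1 := gs_ne _ ha' hn
  have g2 := gs_ne _ neg_half_ne hn
  have l1 := ha' n
  have l2 := neg_half_ne n
  have hpow : (n:ℝ) ^ (a/2) = (n:ℝ) ^ ((a+1)/2) * (n:ℝ) ^ (-1/2 : ℝ) := by
    rw [← Real.rpow_add hn0]; congr 1; ring
  have q1 : (n:ℝ) ^ ((a+1)/2) ≠ 0 := (Real.rpow_pos_of_pos hn0 _).ne'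
  have q2 : (n:ℝ) ^ (-1/2 : ℝ) ≠ 0 := (Real.rpow_pos_of_pos hn0 _).ne'
  have p2 : pc (-1) n ≠ 0 := by
    intro h; rw [h, zero_mul] at e2
    have : (2:ℝ)^n * (n:ℝ) ^ (-1/2 : ℝ) ≠ 0 := by positivity
    exact this e2.symm
  simp only [Pi.mul_apply, Pi.div_apply]
  rw [hpow] at e1
  have e3 : pc a n * (Real.GammaSeq (a/2) n * (a/2 + n))
      = (n:ℝ) ^ ((a+1)/2) * (pc (-1) n * (Real.GammaSeq (-1/2) n * (-1/2 + n))) := by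
    rw [e1, e2]; ring
  rw [mul_div_assoc', mul_div_assoc', div_div_div_cancel_right₀ hn0.ne', div_div, div_eq_div_iff (mul_ne_zero g1 l1) (mul_ne_zero p2 q1)]
  linear_combination -e3

lemma dom_ratio {a b : ℝ} (hb : 0 < b) (hab : b < a) {F : PowerSeries ℝ} (hF : Dom F b) :
    Tendsto (fun n : ℕ => coeff n F / pc (-1) n / (n:ℝ) ^ ((a+1)/2)) atTop (nhds 0) := by
  obtain ⟨M, hM, h⟩ := hF
  have t1 := ((pc_ratio hb).abs.const_mul M).mul
    ((tendsto_rpow_neg_atTop (by linarith : 0 < (a-b)/2)).comp tendsto_natCast_atTop_atTop)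
  rw [mul_zero] at t1
  apply squeeze_zero_norm' _ t1
  filter_upwards [eventually_ge_atTop 1] with n hn
  have hn0 : (0:ℝ) < n := by exact_mod_cast hn
  simp only [Function.comp, Real.norm_eq_abs, abs_div]
  rw [abs_of_pos (Real.rpow_pos_of_pos hn0 ((a+1)/2)), abs_of_pos (Real.rpow_pos_of_pos hn0 ((b+1)/2)),
    abs_of_nonneg (pc_nonneg hb.le n)]
  have hpow : (n:ℝ) ^ ((a+1)/2) = (n:ℝ) ^ ((b+1)/2) * ((n:ℝ) ^ (-((a-b)/2)))⁻¹ := by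
    rw [← Real.rpow_neg hn0.le, ← Real.rpow_add hn0]; congr 1; ring
  rw [hpow]
  calc _ ≤ M * pc b n / |pc (-1) n| / ((n:ℝ) ^ ((b+1)/2) * ((n:ℝ) ^ (-((a-b)/2)))⁻¹) := by
        gcongr
        exact h n
    _ = _ := by
        rw [div_mul_eq_div_div, div_inv_eq_mul]; ring

lemma apx_ratio {ε a c : ℝ} (hε : 0 < ε) (ha : ε < a) {F : PowerSeries ℝ} (hF : Apx ε F a c) :
    Tendsto (fun n : ℕ => coeff n F / pc (-1) n / (n:ℝ) ^ ((a+1)/2)) atTop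
      (nhds (c * (Real.Gamma (-1/2) / Real.Gamma (a/2)))) := by
  have t1 := dom_ratio (a := a) (by linarith) (by linarith : a - ε < a) hF
  have t2 := (pc_ratio (by linarith : 0 < a)).const_mul c
  have t3 := t1.add t2
  rw [zero_add] at t3
  refine t3.congr fun n => ?_
  rw [map_sub, coeff_C_mul, coeff_P]; ring

lemma pow_choose (K : ℕ) : ∃ s : ℕ → ℝ, s K = ((K+1).factorial : ℝ) ∧
    ∀ j : ℕ, (j:ℝ)^(K+1) = ∑ i ∈ Finset.range (K+1), s i * (j.choose (i+1) : ℝ) := by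
  induction K with
  | zero => exact ⟨fun _ => 1, by simp, fun j => by simp⟩
  | succ K ih =>
    obtain ⟨s, hs, h⟩ := ih
    refine ⟨fun i => (if i ≤ K then ((i:ℝ)+1) * s i else 0) + (if i = 0 then 0 else ((i:ℝ)+1) * s (i-1)), ?_, ?_⟩
    · simp only [Nat.add_sub_cancel, hs]
      rw [Nat.factorial_succ (K+1)]
      simp
    · intro j
      have hj : ∀ i, (j:ℝ) * (j.choose (i+1) : ℝ) = ((i:ℝ)+1) * (j.choose (i+1) : ℝ) + ((i:ℝ)+2) * (j.choose (i+2) : ℝ) := by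
        intro i
        rcases Nat.lt_or_ge j (i+1) with hlt | hge
        · rw [Nat.choose_eq_zero_of_lt hlt, Nat.choose_eq_zero_of_lt (by omega : j < i+2)]; simp
        · have := Nat.choose_succ_right_eq j (i+1)
          have h2 : (j.choose (i+2) : ℝ) * ((i:ℝ)+2) = (j.choose (i+1) : ℝ) * ((j:ℝ) - ((i:ℝ)+1)) := by
            have h3 : ((j.choose (i+1+1) * (i+1+1) : ℕ) : ℝ) = ((j.choose (i+1) * (j - (i+1)) : ℕ) : ℝ) := by rw [this]
            rw [Nat.cast_mul, Nat.cast_mul, Nat.cast_sub hge] at h3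
            push_cast at h3
            rw [← h3]; ring
          linear_combination -h2
      simp only [add_mul, Finset.sum_add_distrib]
      rw [Finset.sum_range_succ]
      rw [Finset.sum_range_succ' (fun i => (if i = 0 then (0:ℝ) else (i:ℝ) * s (i-1) + 1 * s (i-1)) * (j.choose (i+1) : ℝ))]
      rw [pow_succ, h j, Finset.sum_mul]
      simp only [if_true, zero_mul, add_zero, if_neg (by omega : ¬ (K + 1 ≤ K))]
      rw [← Finset.sum_add_distrib]
      refine Finset.sum_congr rfl fun i hi => ?_
      rw [Finset.mem_range] at hi
      rw [if_pos (by omega : i ≤ K), if_neg (by omega : i + 1 ≠ 0)]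
      simp only [Nat.add_sub_cancel]
      push_cast
      linear_combination s i * hj i

lemma gamma_neg_half : Real.Gamma (-1/2) = -2 * Real.sqrt Real.pi := by
  have := Real.Gamma_add_one (s := (-1/2 : ℝ)) (by norm_num)
  rw [show (-1/2 : ℝ) + 1 = 1/2 by norm_num, Real.Gamma_one_half_eq] at this
  linarith

theorem final {p : ℝ} (hp : 0 < p) {r : ℕ → ℕ → ℝ} {b : ℕ → ℝ}
    (h : clusterRec p (fun δ => (δ.factorial : ℝ)) r b) (K : ℕ) :
    Tendsto (fun n : ℕ =>
        ((∑ j ∈ Finset.Icc 1 n, (j : ℝ) ^ (K+1) * r n j) / b n)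
          / (n : ℝ) ^ (((K:ℝ)+1) * (p + 1) / 2)) atTop
      (nhds (((K+1).factorial : ℝ) * cc p (K+1) * (2 * Real.sqrt Real.pi / Real.Gamma ((((K:ℝ)+1)*(1+p) - 1)/2)))) := by
  obtain ⟨D, T, hD, h0, h1, h2, h3⟩ := core h
  obtain ⟨e, he1, he, hc⟩ := exists_e hp
  have hz : ∀ k, coeff 0 (D k) = 0 := by intro k; rw [hD]; simp
  obtain ⟨hD0, hA⟩ := main_apx hp D T (cc p) e hz h0 h1 h2 h3 (by simp [cc, RA]) he1 he hc
  have hX : ∀ i : ℕ, Tendsto (fun n : ℕ => (∑ j ∈ Finset.Icc 1 n, (j.choose (i+1) : ℝ) * r n j) / b n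
      / (n:ℝ) ^ (((i:ℝ)+1) * (p+1)/2)) atTop
      (nhds (cc p (i+1) * (2 * Real.sqrt Real.pi / Real.Gamma ((((i:ℝ)+1)*(1+p) - 1)/2)))) := by
    intro i
    have hi : (0:ℝ) ≤ i := by positivity
    have t := (apx_ratio (by positivity : 0 < p/2) (by nlinarith) (hA i)).neg
    have e1 : -(cc p (i+1) * (Real.Gamma (-1/2) / Real.Gamma ((((i:ℝ)+1)*(1+p) - 1)/2)))
        = cc p (i+1) * (2 * Real.sqrt Real.pi / Real.Gamma ((((i:ℝ)+1)*(1+p) - 1)/2)) := by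
      rw [gamma_neg_half]; ring
    rw [e1] at t
    refine t.congr' ?_
    filter_upwards [eventually_ge_atTop 1] with n hn
    have hb : b n = - (n.factorial * pc (-1) n) := by
      have e2 := hD 0 n
      rw [hD0, map_sub, coeff_P, coeff_one, if_neg (by omega)] at e2
      have hf : (n.factorial : ℝ) ≠ 0 := by positivity
      rw [eq_div_iff hf] at e2
      simp only [Nat.choose_zero_right, Nat.cast_one, one_mul] at e2
      rw [← h.1] at e2
      rw [← e2]; ring
    rw [hD, hb, show ((i:ℝ)+1)*(1+p) - 1 + 1 = ((i:ℝ)+1)*(p+1) by ring, div_neg, neg_div]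
    simp only [div_div, mul_assoc]
  obtain ⟨s, hs, hpow⟩ := pow_choose K
  have hlow : ∀ i, i < K → Tendsto (fun n : ℕ => s i * ((∑ j ∈ Finset.Icc 1 n, (j.choose (i+1) : ℝ) * r n j) / b n
      / (n:ℝ) ^ (((K:ℝ)+1) * (p+1)/2))) atTop (nhds 0) := by
    intro i hi
    have hiK : (i:ℝ) < K := by exact_mod_cast hi
    have t := ((hX i).mul ((tendsto_rpow_neg_atTop
      (by have : 0 < ((K:ℝ) - i) := by linarith
          positivity : 0 < ((K:ℝ) - i) * (p+1)/2)).comp tendsto_natCast_atTop_atTop)).const_mul (s i)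
    rw [mul_zero, mul_zero] at t
    refine t.congr' ?_
    filter_upwards [eventually_ge_atTop 1] with n hn
    have hn0 : (0:ℝ) < n := by exact_mod_cast hn
    simp only [Function.comp]
    rw [show ((K:ℝ)+1) * (p+1)/2 = ((i:ℝ)+1)*(p+1)/2 + ((K:ℝ) - i) * (p+1)/2 by ring, Real.rpow_add hn0,
      Real.rpow_neg hn0.le]
    rw [div_mul_eq_div_div]; ring
  have t := (tendsto_finsetSum (Finset.range K) fun i hi => hlow i (Finset.mem_range.mp hi)).add
    ((hX K).const_mul (s K))
  rw [Finset.sum_const_zero, zero_add, hs, ← mul_assoc] at t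
  refine t.congr fun n => ?_
  rw [← hs]
  have e3 : ∑ j ∈ Finset.Icc 1 n, (j : ℝ) ^ (K+1) * r n j
      = ∑ i ∈ Finset.range (K+1), s i * ∑ j ∈ Finset.Icc 1 n, (j.choose (i+1) : ℝ) * r n j := by
    simp only [hpow, Finset.sum_mul, Finset.mul_sum]
    rw [Finset.sum_comm]
    refine Finset.sum_congr rfl fun i _ => Finset.sum_congr rfl fun j _ => by ring
  rw [e3, Finset.sum_range_succ, add_div, add_div, Finset.sum_div (Finset.range K), Finset.sum_div (Finset.range K)]
  congr 1
  · refine Finset.sum_congr rfl fun i _ => by rw [mul_div_assoc (s i), mul_div_assoc (s i)]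
  · rw [mul_div_assoc (s K), mul_div_assoc (s K)]

end Port

/-- for random plane-oriented recursive trees (`α = 1`, `φ(δ) = δ!`),
the `k`-th moment of the root-cluster size, normalized by `n^{k(p+1)/2}`, converges to
`2 p^{k-1} Γ(kp+k-1) √π / ((p+1)^{2k-1} Γ(kp) Γ((kp+k-1)/2))`. -/
theorem stmt8 (p : ℝ) (hp0 : 0 < p) (hp1 : p < 1)
    (r : ℕ → ℕ → ℝ) (b : ℕ → ℝ)
    (hrec : clusterRec p (fun δ => (δ.factorial : ℝ)) r b)
    (k : ℕ) (hk : 1 ≤ k) :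
    Tendsto (fun n : ℕ =>
        ((∑ j ∈ Finset.Icc 1 n, (j : ℝ) ^ k * r n j) / b n)
          / (n : ℝ) ^ ((k : ℝ) * (p + 1) / 2))
      atTop
      (nhds (2 * p ^ (k - 1) * Real.Gamma ((k : ℝ) * p + (k : ℝ) - 1) * Real.sqrt Real.pi
        / ((p + 1) ^ (2 * k - 1) * Real.Gamma ((k : ℝ) * p)
            * Real.Gamma (((k : ℝ) * p + (k : ℝ) - 1) / 2)))) := by
  obtain ⟨K, rfl⟩ : ∃ K, k = K + 1 := ⟨k - 1, by omega⟩
  have t := Port.final hp0 hrec K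
  rw [Port.cc_closed hp0] at t
  have e : 2 * p ^ (K + 1 - 1) * Real.Gamma (((K+1 : ℕ) : ℝ) * p + ((K+1 : ℕ) : ℝ) - 1) * Real.sqrt Real.pi
        / ((p + 1) ^ (2 * (K+1) - 1) * Real.Gamma (((K+1 : ℕ) : ℝ) * p)
            * Real.Gamma ((((K+1 : ℕ) : ℝ) * p + ((K+1 : ℕ) : ℝ) - 1) / 2))
      = p ^ K * Real.Gamma (((K:ℝ)+1) * p + K) / ((p+1)^(2*K+1) * Real.Gamma (((K:ℝ)+1)*p))
        * (2 * Real.sqrt Real.pi / Real.Gamma ((((K:ℝ)+1)*(1+p) - 1)/2)) := by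
    have a1 : ((K+1 : ℕ) : ℝ) * p + ((K+1 : ℕ) : ℝ) - 1 = ((K:ℝ)+1) * p + K := by push_cast; ring
    have a2 : ((K:ℝ)+1)*(1+p) - 1 = ((K:ℝ)+1) * p + K := by ring
    rw [a1, a2, Nat.add_sub_cancel, show 2 * (K+1) - 1 = 2 * K + 1 by omega, Nat.cast_add, Nat.cast_one,
      div_mul_div_comm]
    congr 1; ring
  rw [e]
  refine t.congr fun n => ?_
  push_cast
  rfl
end

section
/- Let d ≥ 2 be an integer, 0<p<1 with p ≠ 1/d, and let r_{n,k} be the root-cluster weights for random increasing d-ary trees (φ(δ)=d!/(d-δ)! for 0≤δ≤d, φ(δ)=0 for δ>d). Then for all real x with |x| < 1/(d-1), Σ_{n≥1} (Σ_{j≥1} j·r_{n,j}) x^n/n! = (1/(pd-1))·((1-(d-1)x)^{-pd/(d-1)} - (1-(d-1)x)^{-1/(d-1)}). -/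
open Finset Filter Asymptotics

lemma coeff_prod_tuple {A : Type*} [CommSemiring A] (δ n : ℕ) (F : Fin δ → PowerSeries A) :
    PowerSeries.coeff n (∏ i, F i) =
      ∑ f ∈ Finset.Nat.antidiagonalTuple δ n, ∏ i, PowerSeries.coeff (f i) (F i) := by
  rw [PowerSeries.coeff_prod]
  refine Finset.sum_equiv Finsupp.equivFunOnFinite ?_ ?_
  · intro l
    simp [Finset.mem_finsuppAntidiag, Finset.Nat.mem_antidiagonalTuple]
  · intro l hl
    rfl

lemma prod_split {A : Type*} [CommMonoid A] (δ s : ℕ) (h : s ≤ δ) (F G : Fin δ → A) :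
    ∏ i : Fin δ, (if (i : ℕ) < s then F i else G i) =
      (∏ i : Fin s, F (Fin.castLE h i)) *
        ∏ j ∈ Finset.univ.filter (fun j : Fin δ => s ≤ (j : ℕ)), G j := by
  rw [Finset.prod_ite]
  congr 1
  · symm
    refine Finset.prod_bij (fun i _ => Fin.castLE h i) ?_ ?_ ?_ ?_
    · intro i _; simp
    · intro i _ j _ hij; simpa using hij
    · intro j hj
      simp at hj
      exact ⟨⟨j, hj⟩, by simp, by ext; simp⟩
    · intros; rfl
  · simp

lemma prod_const_split {A : Type*} [CommMonoid A] (δ s : ℕ) (h : s ≤ δ) (F G : A) :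
    ∏ i : Fin δ, (if (i : ℕ) < s then F else G) = F ^ s * G ^ (δ - s) := by
  rw [prod_split δ s h (fun _ => F) (fun _ => G), Finset.prod_const, Finset.prod_const]
  congr 2
  · simp
  · have := Finset.card_filter_add_card_filter_not (s := (Finset.univ : Finset (Fin δ))) (fun j : Fin δ => (j:ℕ) < s)
    have h2 : (Finset.univ.filter (fun j : Fin δ => (j:ℕ) < s)).card = s := by
      rw [Fin.card_filter_val_lt]; omega
    simp only [not_lt, Finset.card_univ, Fintype.card_fin] at this
    omega

lemma choose_rec (a : ℝ) (n : ℕ) :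
    ((n : ℝ) + 1) * Ring.choose a (n + 1) = (a - n) * Ring.choose a n := by
  have h1 := Ring.descPochhammer_eq_factorial_smul_choose a (n + 1)
  have h2 := Ring.descPochhammer_eq_factorial_smul_choose a n
  rw [descPochhammer_succ_right, Polynomial.smeval_mul, h2] at h1
  simp only [Polynomial.smeval_sub, Polynomial.smeval_X, Polynomial.smeval_natCast, pow_one,
    pow_zero, nsmul_eq_mul, mul_one, Nat.factorial_succ, Nat.cast_mul, Nat.cast_add,
    Nat.cast_one] at h1
  have h3 : (n.factorial : ℝ) ≠ 0 := by positivity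
  apply mul_left_cancel₀ h3
  linear_combination -h1

lemma hasSum_g (a c x : ℝ) (hc : 0 < c) (hx : |x| < 1 / c) (g : ℕ → ℝ) (h0 : g 0 = 1)
    (hg : ∀ n : ℕ, ((n : ℝ) + 1) * g (n + 1) = (a + c * n) * g n) :
    HasSum (fun n => g n * x ^ n) ((1 - c * x) ^ (-a / c)) := by
  have hgn : ∀ n, g n = Ring.choose (-a / c) n * (-c) ^ n := by
    intro n
    induction n with
    | zero => simp [h0]
    | succ n ih =>
      have h3 : ((n : ℝ) + 1) ≠ 0 := by positivity
      apply mul_left_cancel₀ h3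
      rw [hg, ih]
      have := choose_rec (-a / c) n
      rw [pow_succ]
      have h4 : (a + c * n) = -c * (-a / c - n) := by field_simp; ring
      rw [h4]
      linear_combination (-c) ^ n * c * this
  have h := (Real.one_add_rpow_hasFPowerSeriesOnBall_zero (a := -a / c)).hasSum
    (y := -(c * x)) (by
      have : |c * x| < 1 := by
        rw [abs_mul, abs_of_pos hc]
        rw [lt_div_iff₀ hc] at hx
        linarith
      rw [← ENNReal.ofReal_one, Metric.eball_ofReal]
      simpa [abs_mul] using this)
  simp only [binomialSeries_apply, List.ofFn_const, List.prod_replicate, zero_add, smul_eq_mul] at h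
  have h5 : (fun n => g n * x ^ n) = fun n => Ring.choose (-a / c) n * (-(c * x)) ^ n := by
    funext n
    rw [hgn, ← neg_mul, mul_pow]; ring
  rw [h5, sub_eq_add_neg]
  exact h

lemma rvanish {p : ℝ} {φ : ℕ → ℝ} {r : ℕ → ℕ → ℝ} {b : ℕ → ℝ} (hrec : clusterRec p φ r b) :
    ∀ n k : ℕ, 1 ≤ n → n < k → r n k = 0 := by
  intro n
  induction n using Nat.strong_induction_on with
  | _ n ih =>
  intro k hn hk
  rw [hrec.2 n k hn (by omega)]
  refine Finset.sum_eq_zero fun δ _ => Finset.sum_eq_zero fun s _ => ?_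
  refine mul_eq_zero_of_right _ (Finset.sum_eq_zero fun f hf => ?_)
  refine mul_eq_zero_of_right _ (Finset.sum_eq_zero fun g hg => ?_)
  simp only [Finset.mem_filter, Finset.Nat.mem_antidiagonalTuple] at hf hg
  have hs : s.1 ≤ δ := Nat.lt_succ_iff.mp (Finset.mem_range.mp s.2)
  have hle : ∑ i : Fin s.1, f (Fin.castLE hs i) ≤ ∑ i, f i := by
    have := Finset.sum_map Finset.univ (Fin.castLEEmb hs) f
    simp only [Fin.castLEEmb_apply] at this
    rw [← this]
    exact Finset.sum_le_sum_of_subset (Finset.subset_univ _)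
  have : ∃ i : Fin s.1, f (Fin.castLE hs i) < g i := by
    by_contra hcon
    push Not at hcon
    have := Finset.sum_le_sum (fun i (_ : i ∈ Finset.univ) => hcon i)
    omega
  obtain ⟨i, hi⟩ := this
  have h1 : f (Fin.castLE hs i) ≤ ∑ i, f i :=
    Finset.single_le_sum (f := f) (fun _ _ => Nat.zero_le _) (Finset.mem_univ _)
  have : ∏ i : Fin s.1, r (f (Fin.castLE hs i)) (g i) = 0 :=
    Finset.prod_eq_zero (Finset.mem_univ i) (ih _ (by omega) _ (hf.2 _) hi)
  rw [this]; simp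

noncomputable def PP (r : ℕ → ℕ → ℝ) (m : ℕ) : Polynomial ℝ :=
  ∑ k ∈ Finset.Icc 1 m, Polynomial.C (r m k) * Polynomial.X ^ k

noncomputable def RS (r : ℕ → ℕ → ℝ) : PowerSeries (Polynomial ℝ) :=
  PowerSeries.mk fun n => Polynomial.C (1 / (n.factorial : ℝ)) * PP r n

noncomputable def BS (b : ℕ → ℝ) : PowerSeries (Polynomial ℝ) :=
  PowerSeries.mk fun n => Polynomial.C (1 / (n.factorial : ℝ)) * Polynomial.C (b n)

lemma PP_coeff {r : ℕ → ℕ → ℝ} (hv : ∀ n k : ℕ, 1 ≤ n → n < k → r n k = 0) (m k : ℕ)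
    (hm : 1 ≤ m) : (PP r m).coeff k = if 1 ≤ k then r m k else 0 := by
  simp only [PP, Polynomial.finsetSum_coeff, Polynomial.coeff_C_mul, Polynomial.coeff_X_pow,
    mul_ite, mul_one, mul_zero, Finset.sum_ite_eq, Finset.mem_Icc]
  by_cases h1 : 1 ≤ k
  · by_cases h2 : k ≤ m
    · simp [h1, h2]
    · simp [h1, h2, hv m k hm (by omega)]
  · simp [h1]

lemma coeff_RB (r : ℕ → ℕ → ℝ) (b : ℕ → ℝ) (hb0 : b 0 = 0) (δ s n : ℕ) (h : s ≤ δ) :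
    PowerSeries.coeff n (RS r ^ s * BS b ^ (δ - s)) =
      ∑ f ∈ (Finset.Nat.antidiagonalTuple δ n).filter (fun f => ∀ i, 1 ≤ f i),
        Polynomial.C (1 / ∏ i, ((f i).factorial : ℝ)) *
          ((∏ i : Fin s, PP r (f (Fin.castLE h i))) *
            Polynomial.C (∏ j ∈ Finset.univ.filter (fun j : Fin δ => s ≤ (j : ℕ)), b (f j))) := by
  rw [← prod_const_split δ s h, coeff_prod_tuple]
  have key : ∀ f : Fin δ → ℕ,
      (∏ i : Fin δ, PowerSeries.coeff (f i) (if (i : ℕ) < s then RS r else BS b)) =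
        Polynomial.C (1 / ∏ i, ((f i).factorial : ℝ)) *
          ((∏ i : Fin s, PP r (f (Fin.castLE h i))) *
            Polynomial.C (∏ j ∈ Finset.univ.filter (fun j : Fin δ => s ≤ (j : ℕ)), b (f j))) := by
    intro f
    rw [map_prod, ← prod_split δ s h (fun i => PP r (f i)) (fun i => Polynomial.C (b (f i))),
      one_div, ← Finset.prod_inv_distrib, map_prod, ← Finset.prod_mul_distrib]
    refine Finset.prod_congr rfl fun i _ => ?_
    split_ifs <;> simp [RS, BS]
  rw [Finset.sum_filter]
  refine Finset.sum_congr rfl fun f _ => ?_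
  split_ifs with hf
  · exact key f
  · push Not at hf
    obtain ⟨i, hi⟩ := hf
    refine Finset.prod_eq_zero (Finset.mem_univ i) ?_
    have : f i = 0 := by omega
    rw [this]
    split_ifs <;> simp [RS, BS, PP, hb0]

lemma coeff_PPprod {r : ℕ → ℕ → ℝ} (hv : ∀ n k : ℕ, 1 ≤ n → n < k → r n k = 0) (s j : ℕ)
    (f : Fin s → ℕ) (hf : ∀ i, 1 ≤ f i) :
    (∏ i, PP r (f i)).coeff j =
      ∑ g ∈ (Finset.Nat.antidiagonalTuple s j).filter (fun g => ∀ i, 1 ≤ g i),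
        ∏ i, r (f i) (g i) := by
  rw [← Polynomial.coeff_coe]
  have : ((∏ i, PP r (f i) : Polynomial ℝ) : PowerSeries ℝ) = ∏ i, (PP r (f i) : PowerSeries ℝ) :=
    by
    simp only [← Polynomial.coeToPowerSeries.ringHom_apply, map_prod]
  rw [this, coeff_prod_tuple, Finset.sum_filter]
  refine Finset.sum_congr rfl fun g _ => ?_
  split_ifs with hg
  · refine Finset.prod_congr rfl fun i _ => ?_
    rw [Polynomial.coeff_coe, PP_coeff hv _ _ (hf i), if_pos (hg i)]
  · push Not at hg
    obtain ⟨i, hi⟩ := hg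
    refine Finset.prod_eq_zero (Finset.mem_univ i) ?_
    rw [Polynomial.coeff_coe, PP_coeff hv _ _ (hf i), if_neg (by omega)]

lemma main_id {p : ℝ} {d : ℕ} {r : ℕ → ℕ → ℝ} {b : ℕ → ℝ} (hrec : clusterRec p
      (fun δ => if δ ≤ d then ((d.factorial : ℝ) / ((d - δ).factorial : ℝ)) else 0) r b) (n : ℕ) :
    Polynomial.C ((n : ℝ) + 1) * PowerSeries.coeff (n + 1) (RS r) =
      Polynomial.X * PowerSeries.coeff n
        ((1 + (PowerSeries.C (Polynomial.C p) * RS r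
          + PowerSeries.C (Polynomial.C (1 - p)) * BS b)) ^ d) := by
  have hv := rvanish hrec
  have hb0 : b 0 = 0 := by rw [hrec.1]; simp
  ext k
  rcases k with _ | j
  · simp [RS, PP_coeff hv]
  have hl : PowerSeries.coeff (n + 1) (RS r) =
    Polynomial.C (1 / ((n + 1).factorial : ℝ)) * PP r (n + 1) := by simp [RS]
  rw [Polynomial.coeff_X_mul, hl, Polynomial.coeff_C_mul, Polynomial.coeff_C_mul]
  rw [PP_coeff hv _ _ (by omega), if_pos (by omega), hrec.2 (n + 1) (j + 1) (by omega) (by omega)]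
  set T : ℕ → ℕ → ℝ := fun δ s =>
    (PowerSeries.coeff n (RS r ^ s * BS b ^ (δ - s))).coeff j with hT
  have hR : (PowerSeries.coeff n
        ((1 + (PowerSeries.C (Polynomial.C p) * RS r
          + PowerSeries.C (Polynomial.C (1 - p)) * BS b)) ^ d)).coeff j =
      ∑ δ ∈ Finset.range (d + 1), ∑ s ∈ Finset.range (δ + 1),
        (d.choose δ : ℝ) * (δ.choose s) * (p ^ s * (1 - p) ^ (δ - s)) * T δ s := by
    rw [add_comm, add_pow]
    simp only [map_sum, Polynomial.finsetSum_coeff]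
    refine Finset.sum_congr rfl fun δ _ => ?_
    rw [one_pow, mul_one, add_pow, Finset.sum_mul]
    simp only [map_sum, Polynomial.finsetSum_coeff]
    refine Finset.sum_congr rfl fun s _ => ?_
    have : (PowerSeries.C (Polynomial.C p) * RS r) ^ s *
        (PowerSeries.C (Polynomial.C (1 - p)) * BS b) ^ (δ - s) * (δ.choose s : PowerSeries (Polynomial ℝ))
          * (d.choose δ : PowerSeries (Polynomial ℝ)) =
        PowerSeries.C (Polynomial.C ((d.choose δ : ℝ) * (δ.choose s) * (p ^ s * (1 - p) ^ (δ - s))))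
          * (RS r ^ s * BS b ^ (δ - s)) := by
      simp only [map_mul, map_pow, map_natCast]
      ring
    rw [this, PowerSeries.coeff_C_mul, Polynomial.coeff_C_mul]
  have hT0 : ∀ δ s, s ≤ δ → n < δ → T δ s = 0 := by
    intro δ s hs hn
    simp only [hT]
    rw [coeff_RB r b hb0 δ s n hs, Finset.sum_eq_zero, Polynomial.coeff_zero]
    intro f hf
    simp only [Finset.mem_filter, Finset.Nat.mem_antidiagonalTuple] at hf
    have := Finset.sum_le_sum (fun i (_ : i ∈ Finset.univ) => hf.2 i)
    simp at this
    omega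
  have hTs : ∀ δ s, ∀ hs : s ≤ δ, (n.factorial : ℝ) * (p ^ s * (1 - p) ^ (δ - s)) * T δ s =
      ∑ f ∈ (Finset.Nat.antidiagonalTuple δ n).filter (fun f => ∀ i, 1 ≤ f i),
            ((n.factorial : ℝ) / ∏ i, ((f i).factorial : ℝ)) *
              ∑ g ∈ (Finset.Nat.antidiagonalTuple s j).filter (fun g => ∀ i, 1 ≤ g i),
                p ^ s * (1 - p) ^ (δ - s) *
                  (∏ i : Fin s, r (f (Fin.castLE hs i)) (g i)) *
                  ∏ j ∈ Finset.univ.filter (fun j : Fin δ => s ≤ (j : ℕ)), b (f j) := by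
    intro δ s hs
    simp only [hT]
    rw [coeff_RB r b hb0 δ s n hs, Polynomial.finsetSum_coeff, Finset.mul_sum]
    refine Finset.sum_congr rfl fun f hf => ?_
    simp only [Finset.mem_filter, Finset.Nat.mem_antidiagonalTuple] at hf
    rw [Polynomial.coeff_C_mul, Polynomial.coeff_mul_C, coeff_PPprod hv s j _ (fun i => hf.2 _),
      ← Finset.sum_mul, ← Finset.mul_sum]
    ring
  rw [hR]
  have hφ : ∀ δ : ℕ, (if δ ≤ d then ((d.factorial : ℝ) / ((d - δ).factorial : ℝ)) else 0) /
      (δ.factorial : ℝ) = d.choose δ := by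
    intro δ
    split_ifs with h
    · rw [Nat.cast_choose ℝ h]; field_simp
    · rw [Nat.choose_eq_zero_of_lt (by omega)]; simp
  have hL : ∀ N M : ℕ, N ≤ M → (∀ δ ∈ Finset.range M, δ ∉ Finset.range N → ∀ s ≤ δ, (d.choose δ : ℝ) * T δ s = 0) →
      ∑ δ ∈ Finset.range N, ∑ s ∈ Finset.range (δ + 1),
        (d.choose δ : ℝ) * (δ.choose s) * (p ^ s * (1 - p) ^ (δ - s)) * T δ s =
      ∑ δ ∈ Finset.range M, ∑ s ∈ Finset.range (δ + 1),
        (d.choose δ : ℝ) * (δ.choose s) * (p ^ s * (1 - p) ^ (δ - s)) * T δ s := by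
    intro N M hNM h
    refine Finset.sum_subset (Finset.range_mono hNM) fun δ h1 h2 => Finset.sum_eq_zero fun s hs => ?_
    have := h δ h1 h2 s (by simp at hs; omega)
    linear_combination (δ.choose s) * (p ^ s * (1 - p) ^ (δ - s)) * this
  rw [hL (d + 1) (d + n + 1) (by omega) (by
    intro δ _ h2 s _
    simp at h2
    rw [Nat.choose_eq_zero_of_lt (by omega)]; simp),
    ← hL (n + 1) (d + n + 1) (by omega) (by
    intro δ _ h2 s hs
    simp at h2
    rw [hT0 δ s hs (by omega)]; simp)]
  have h1 : ((n : ℝ) + 1) * (1 / ((n + 1).factorial : ℝ)) = 1 / (n.factorial : ℝ) := by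
    rw [Nat.factorial_succ]; push_cast; field_simp
  rw [← mul_assoc, h1, Finset.mul_sum]
  refine Finset.sum_congr rfl fun δ _ => ?_
  rw [← Finset.sum_attach (Finset.range (δ + 1)), Finset.mul_sum]
  refine Finset.sum_congr rfl fun s _ => ?_
  have hs : s.1 ≤ δ := Nat.lt_succ_iff.mp (Finset.mem_range.mp s.2)
  have := hTs δ s.1 hs
  simp only [Nat.add_sub_cancel]
  rw [← this, hφ]
  field_simp

noncomputable def Fr (b : ℕ → ℝ) : PowerSeries ℝ :=
  PowerSeries.mk fun n => b n / (n.factorial : ℝ)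

noncomputable def Mr (r : ℕ → ℕ → ℝ) : PowerSeries ℝ :=
  PowerSeries.mk fun n => (∑ j ∈ Finset.Icc 1 n, (j : ℝ) * r n j) / (n.factorial : ℝ)

lemma dual_pow (k : ℕ) : (1 + DualNumber.eps : DualNumber ℝ) ^ k = 1 + (k : ℝ) • DualNumber.eps := by
  induction k with
  | zero => simp
  | succ k ih =>
    rw [pow_succ, ih]
    ext
    · simp
    · simp [add_comm]

lemma sqzero_pow {A : Type*} [CommRing A] (a x : A) (hx : x * x = 0) (c : ℕ) :
    (a + x) ^ (c + 1) = a ^ (c + 1) + (c + 1) * a ^ c * x := by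
  induction c with
  | zero => simp
  | succ c ih =>
    rw [pow_succ, ih]
    push_cast
    linear_combination (c + 1) * a ^ c * hx

lemma odes {p : ℝ} {c : ℕ} {r : ℕ → ℕ → ℝ} {b : ℕ → ℝ}
    (hb : ∀ m, b m = ∑ k ∈ Finset.Icc 1 m, r m k)
    (hm : ∀ n : ℕ, Polynomial.C ((n : ℝ) + 1) * PowerSeries.coeff (n + 1) (RS r) =
      Polynomial.X * PowerSeries.coeff n
        ((1 + (PowerSeries.C (Polynomial.C p) * RS r
          + PowerSeries.C (Polynomial.C (1 - p)) * BS b)) ^ (c + 1))) :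
    PowerSeries.derivative ℝ (1 + Fr b) = (1 + Fr b) ^ (c + 1) ∧
    PowerSeries.derivative ℝ (Mr r) = (1 + Fr b) ^ (c + 1) +
      (PowerSeries.C (((c : ℝ) + 1) * p)) * (1 + Fr b) ^ c * Mr r := by
  let ι : ℝ →+* DualNumber ℝ := algebraMap ℝ (DualNumber ℝ)
  let θ : Polynomial ℝ →+* DualNumber ℝ :=
    (Polynomial.aeval (1 + DualNumber.eps : DualNumber ℝ)).toRingHom
  have hθC : ∀ a, θ (Polynomial.C a) = ι a := fun a => by simp [θ, ι]
  have hθX : θ Polynomial.X = 1 + DualNumber.eps := by simp [θ]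
  let E : PowerSeries (DualNumber ℝ) := PowerSeries.C DualNumber.eps
  let F' := PowerSeries.map ι (Fr b)
  let M' := PowerSeries.map ι (Mr r)
  have hB : PowerSeries.map θ (BS b) = F' := by
    ext1 n
    simp only [F', PowerSeries.coeff_map, BS, Fr, PowerSeries.coeff_mk, map_mul, hθC]
    rw [← map_mul]; congr 1; ring
  have hR : PowerSeries.map θ (RS r) = F' + E * M' := by
    ext1 n
    simp only [F', M', E, map_add, PowerSeries.coeff_C_mul, PowerSeries.coeff_map, RS, Fr, Mr,
      PowerSeries.coeff_mk, map_mul, hθC, PP, map_sum, map_pow, hθX, dual_pow, hb]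
    simp only [ι, TrivSqZeroExt.algebraMap_eq_inl]
    ext
    · simp [TrivSqZeroExt.fst_sum]
      ring
    · simp [TrivSqZeroExt.snd_sum, mul_comm, Finset.mul_sum]
  have hEE : E * E = 0 := by simp [E, ← map_mul]
  have key : ∀ n : ℕ, ι ((n : ℝ) + 1) * PowerSeries.coeff (n + 1) (F' + E * M') =
      (1 + DualNumber.eps) * PowerSeries.coeff n
        (PowerSeries.map ι ((1 + Fr b) ^ (c + 1)) +
          E * PowerSeries.map ι (PowerSeries.C (((c : ℝ) + 1) * p) * (1 + Fr b) ^ c * Mr r)) := by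
    intro n
    have h := congrArg θ (hm n)
    rw [map_mul, map_mul, hθC, hθX, ← PowerSeries.coeff_map, ← PowerSeries.coeff_map, hR] at h
    rw [h]
    congr 2
    simp only [map_pow, map_add, map_mul, map_one, hR, hB, PowerSeries.map_C, hθC, map_sub]
    have e1 : (1 + (PowerSeries.C (ι p) * (F' + E * M') + (1 - PowerSeries.C (ι p)) * F'))
      = (1 + F') + PowerSeries.C (ι p) * E * M' := by ring
    rw [e1, sqzero_pow]
    · simp only [F', M', map_natCast]; ring
    · linear_combination (PowerSeries.C (ι p)) ^ 2 * M' ^ 2 * hEE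
  have kf : ∀ n : ℕ, ((n : ℝ) + 1) * PowerSeries.coeff (n + 1) (Fr b) =
      PowerSeries.coeff n ((1 + Fr b) ^ (c + 1)) := by
    intro n
    have h := congrArg TrivSqZeroExt.fst (key n)
    simp only [F', M', E, map_add (PowerSeries.coeff _), PowerSeries.coeff_C_mul,
      PowerSeries.coeff_map] at h
    simpa [ι, TrivSqZeroExt.algebraMap_eq_inl] using h
  have ks : ∀ n : ℕ, ((n : ℝ) + 1) * PowerSeries.coeff (n + 1) (Mr r) =
      PowerSeries.coeff n ((1 + Fr b) ^ (c + 1)) +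
      PowerSeries.coeff n (PowerSeries.C (((c : ℝ) + 1) * p) * (1 + Fr b) ^ c * Mr r) := by
    intro n
    have h := congrArg TrivSqZeroExt.snd (key n)
    simp only [F', M', E, map_add (PowerSeries.coeff _), PowerSeries.coeff_C_mul,
      PowerSeries.coeff_map] at h
    simp [ι, TrivSqZeroExt.algebraMap_eq_inl, -map_mul] at h
    linarith
  constructor
  · ext n
    rw [PowerSeries.coeff_derivative, ← kf n]
    simp [PowerSeries.coeff_one]
    ring
  · ext n
    rw [PowerSeries.coeff_derivative, map_add, ← ks n]
    ring

lemma solveF {c : ℕ} (F : PowerSeries ℝ) (h0 : PowerSeries.constantCoeff F = 1)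
    (hF : PowerSeries.derivative ℝ F = F ^ (c + 1)) :
    (1 - PowerSeries.C (c : ℝ) * PowerSeries.X) * F ^ c = 1 := by
  rcases c with _ | c
  · simp
  have hne : PowerSeries.constantCoeff (F ^ (c + 1)) ≠ 0 := by simp [h0]
  have hinv : (F ^ (c + 1))⁻¹ = 1 - PowerSeries.C ((c + 1 : ℕ) : ℝ) * PowerSeries.X := by
    apply PowerSeries.derivative.ext
    · rw [PowerSeries.derivative_inv', PowerSeries.derivative_pow, hF]
      have e : (F ^ (c + 1))⁻¹ * F ^ (c + 1) = 1 := PowerSeries.inv_mul_cancel _ hne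
      simp only [map_sub, Derivation.map_one_eq_zero, Derivation.leibniz, PowerSeries.derivative_C,
        PowerSeries.derivative_X, smul_eq_mul]
      simp only [map_natCast, Nat.add_sub_cancel]
      linear_combination (-((c + 1 : ℕ) : PowerSeries ℝ)) * ((F ^ (c + 1))⁻¹ * F ^ (c + 1) + 1) * e
    · simp [h0]
  rw [← hinv]
  exact PowerSeries.inv_mul_cancel _ hne

lemma coeff_lin (c : ℝ) (G : PowerSeries ℝ) (n : ℕ) :
    PowerSeries.coeff n ((1 - PowerSeries.C c * PowerSeries.X) * PowerSeries.derivative ℝ G) =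
      (n + 1) * PowerSeries.coeff (n + 1) G - c * n * PowerSeries.coeff n G := by
  rw [sub_mul, one_mul, map_sub, mul_assoc, PowerSeries.coeff_C_mul, PowerSeries.coeff_derivative]
  rcases n with _ | n
  · simp
  · rw [PowerSeries.coeff_succ_X_mul, PowerSeries.coeff_derivative]
    push_cast; ring

lemma exists_g (a c : ℝ) : ∃ g : ℕ → ℝ, g 0 = 1 ∧
    ∀ n : ℕ, ((n : ℝ) + 1) * g (n + 1) = (a + c * n) * g n := by
  refine ⟨fun n => Nat.rec 1 (fun n y => (a + c * n) * y / (n + 1)) n, rfl, fun n => ?_⟩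
  have : (n : ℝ) + 1 ≠ 0 := by positivity
  field_simp

/-- for random increasing `d`-ary trees with `p ≠ 1/d`, closed form for
the EGF of the first moments of the root-cluster weights. -/
theorem stmt11 (d : ℕ) (hd : 2 ≤ d) (p : ℝ) (hp0 : 0 < p) (hp1 : p < 1)
    (hpd : p ≠ 1 / (d : ℝ))
    (r : ℕ → ℕ → ℝ) (b : ℕ → ℝ)
    (hrec : clusterRec p
      (fun δ => if δ ≤ d then ((d.factorial : ℝ) / ((d - δ).factorial : ℝ)) else 0) r b) :
    ∀ x : ℝ, |x| < 1 / ((d : ℝ) - 1) →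
      ∑' n : ℕ, (∑ j ∈ Finset.Icc 1 n, (j : ℝ) * r n j) * x ^ n / (n.factorial : ℝ)
        = (1 / (p * d - 1)) *
            ((1 - ((d : ℝ) - 1) * x) ^ (-(p * d) / ((d : ℝ) - 1))
              - (1 - ((d : ℝ) - 1) * x) ^ (-(1 / ((d : ℝ) - 1)))) := by
  obtain ⟨c, rfl⟩ : ∃ c, d = c + 1 := ⟨d - 1, by omega⟩
  have hc : 0 < (c : ℝ) := by
    have : 0 < c := by omega
    exact_mod_cast this
  have hcc : (((c + 1 : ℕ) : ℝ) - 1) = c := by push_cast; ring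
  obtain ⟨h1, h2⟩ := odes hrec.1 (main_id hrec)
  have hb0 : b 0 = 0 := by rw [hrec.1]; simp
  have hF0 : PowerSeries.constantCoeff (1 + Fr b) = 1 := by
    rw [← PowerSeries.coeff_zero_eq_constantCoeff_apply]; simp [Fr, hb0]
  have hF := solveF (1 + Fr b) hF0 h1
  have o1 : (1 - PowerSeries.C (c : ℝ) * PowerSeries.X) * PowerSeries.derivative ℝ (1 + Fr b)
      = 1 + Fr b := by
    rw [h1]; linear_combination (1 + Fr b) * hF
  have o2 : (1 - PowerSeries.C (c : ℝ) * PowerSeries.X) * PowerSeries.derivative ℝ (Mr r)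
      = 1 + Fr b + PowerSeries.C (((c : ℝ) + 1) * p) * Mr r := by
    rw [h2]
    linear_combination (1 + Fr b + PowerSeries.C (((c : ℝ) + 1) * p) * Mr r) * hF
  have f0 : PowerSeries.coeff 0 (1 + Fr b) = 1 := by
    rw [PowerSeries.coeff_zero_eq_constantCoeff_apply, hF0]
  have fr : ∀ n : ℕ, ((n : ℝ) + 1) * PowerSeries.coeff (n + 1) (1 + Fr b) =
      (1 + c * n) * PowerSeries.coeff n (1 + Fr b) := by
    intro n
    have := congrArg (PowerSeries.coeff n) o1
    rw [coeff_lin] at this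
    linarith
  obtain ⟨g, g0, gr⟩ := exists_g (p * (c + 1)) c
  have hA : p * (c + 1) - 1 ≠ 0 := by
    intro h
    apply hpd
    push_cast
    field_simp
    linarith
  have hM : ∀ n, PowerSeries.coeff n (Mr r) =
      (1 / (p * (c + 1) - 1)) * (g n - PowerSeries.coeff n (1 + Fr b)) := by
    intro n
    induction n with
    | zero => rw [f0, g0]; simp [Mr]
    | succ n ih =>
      have := congrArg (PowerSeries.coeff n) o2
      rw [coeff_lin, map_add (PowerSeries.coeff n), PowerSeries.coeff_C_mul] at this
      have h3 : (n : ℝ) + 1 ≠ 0 := by positivity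
      apply mul_left_cancel₀ h3
      have e1 := gr n
      have e2 := fr n
      have e3 : ((n : ℝ) + 1) * PowerSeries.coeff (n + 1) (Mr r) =
        PowerSeries.coeff n (1 + Fr b) + ((c + 1) * p + c * n) * PowerSeries.coeff n (Mr r) := by
        linarith
      rw [e3, ih]
      have hq : 1 / (p * (c + 1) - 1) * (p * (c + 1) - 1) = 1 := one_div_mul_cancel hA
      generalize 1 / (p * ((c : ℝ) + 1) - 1) = q at hq
      linear_combination q * e2 - q * e1 - PowerSeries.coeff n (1 + Fr b) * hq
  intro x hx
  rw [hcc] at hx ⊢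
  have s1 := hasSum_g 1 c x hc hx (fun n => PowerSeries.coeff n (1 + Fr b)) f0 fr
  have s2 := hasSum_g (p * (c + 1)) c x hc hx g g0 gr
  have s3 := (s2.sub s1).mul_left (1 / (p * (c + 1) - 1))
  have e : (fun n : ℕ => (∑ j ∈ Finset.Icc 1 n, (j : ℝ) * r n j) * x ^ n / (n.factorial : ℝ)) =
      fun n => (1 / (p * (c + 1) - 1)) *
        (g n * x ^ n - PowerSeries.coeff n (1 + Fr b) * x ^ n) := by
    funext n
    have := hM n
    simp only [Mr, PowerSeries.coeff_mk] at this
    rw [mul_div_right_comm, this]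
    ring
  rw [e, s3.tsum_eq]
  push_cast
  rw [neg_div]
  rw [neg_div]
end

section
/- Let 1/2 < p < 1 and let D_k denote the sequence defined by the Bell-polynomial recursion with d=2, i.e. D_1 = 1/(2p-1) and for k ≥ 2, (k-1)(2p-1)·D_k = p^2·2·B_{k,2}(D_1,…,D_{k-1}) = p^2·Σ_{i=1}^{k-1} C(k,i)·D_i·D_{k-i}. Then for every integer k ≥ 1, D_k = k!·p^{2(k-1)}/(2p-1)^{2k-1}. -/
open Finset Filter Asymptotics

/-- closed form for the Bell-polynomial recursion coefficients when `d = 2`: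
`D_k = k! p^{2(k-1)} / (2p-1)^{2k-1}`. -/
theorem stmt14 (p : ℝ) (hp0 : 1 / 2 < p) (hp1 : p < 1)
    (D : ℕ → ℝ) (hD1 : D 1 = 1 / (2 * p - 1))
    (hDk : ∀ k : ℕ, 2 ≤ k →
      ((k : ℝ) - 1) * (2 * p - 1) * D k
        = p ^ 2 * ∑ i ∈ Finset.Icc 1 (k - 1), (k.choose i : ℝ) * D i * D (k - i)) :
    ∀ k : ℕ, 1 ≤ k →
      D k = (k.factorial : ℝ) * p ^ (2 * (k - 1)) / (2 * p - 1) ^ (2 * k - 1) := by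
  have hq : (2 * p - 1) ≠ 0 := by
    intro h
    linarith
  intro k
  induction k using Nat.strong_induction_on with
  | _ k ih =>
  intro hk
  rcases Nat.lt_or_ge k 2 with h2 | h2
  · have : k = 1 := by omega
    subst this
    simp [hD1]
  have hrec := hDk k h2
  obtain ⟨n, rfl⟩ : ∃ n, k = n + 2 := ⟨k - 2, by omega⟩
  have hterm : ∀ i ∈ Finset.Icc 1 (n + 2 - 1),
      ((n + 2).choose i : ℝ) * D i * D (n + 2 - i)
        = ((n + 2).factorial : ℝ) * p ^ (2 * n) / (2 * p - 1) ^ (2 * n + 2) := by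
    intro i hi
    rw [Finset.mem_Icc] at hi
    obtain ⟨a, rfl⟩ : ∃ a, i = a + 1 := ⟨i - 1, by omega⟩
    obtain ⟨c, rfl⟩ : ∃ c, n = a + c := ⟨n - a, by omega⟩
    have e : a + c + 2 - (a + 1) = c + 1 := by omega
    have hf := Nat.choose_mul_factorial_mul_factorial (show a + 1 ≤ a + c + 2 by omega)
    rw [e] at hf ⊢
    rw [ih (a + 1) (by omega) (by omega), ih (c + 1) (by omega) (by omega), ← hf]
    have e1 : 2 * (a + 1) - 1 = 2 * a + 1 := by omega
    have e2 : 2 * (c + 1) - 1 = 2 * c + 1 := by omega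
    rw [e1, e2, Nat.add_sub_cancel, Nat.add_sub_cancel]
    push_cast
    have e3 : (2 * p - 1) ^ (2 * (a + c) + 2)
        = (2 * p - 1) ^ (2 * a + 1) * (2 * p - 1) ^ (2 * c + 1) := by ring
    have e4 : p ^ (2 * (a + c)) = p ^ (2 * a) * p ^ (2 * c) := by ring
    rw [e3, e4, mul_assoc, div_mul_div_comm, ← mul_div_assoc]
    congr 1
    ring
  rw [Finset.sum_congr rfl hterm, Finset.sum_const, Nat.card_Icc, nsmul_eq_mul] at hrec
  have e1 : n + 2 - 1 + 1 - 1 = n + 1 := by omega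
  have e2 : 2 * (n + 2) - 1 = 2 * n + 2 + 1 := by omega
  have e3 : 2 * (n + 2 - 1) = 2 * n + 2 := by omega
  rw [e1] at hrec
  rw [e2, e3]
  push_cast at hrec
  have hn : ((n : ℝ) + 1) ≠ 0 := by positivity
  apply mul_left_cancel₀ (mul_ne_zero hn hq)
  have h3 : ((n : ℝ) + 1) * (2 * p - 1) * D (n + 2)
      = p ^ 2 * (((n : ℝ) + 1) * (((n + 2).factorial : ℝ) * p ^ (2 * n) / (2 * p - 1) ^ (2 * n + 2))) := by
    rw [← hrec]
    ring
  rw [h3, pow_succ (2 * p - 1) (2 * n + 2)]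
  have hQ := pow_ne_zero (2 * n + 2) hq
  generalize (2 * p - 1) ^ (2 * n + 2) = Q at *
  clear hrec h3 hterm ih hDk hD1 e1 e2 e3
  generalize 2 * p - 1 = q at *
  field_simp
  ring
end
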